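/- arXiv:2403.18678 — 3 statements merged into one kernel-verified Lean document; each statement's English description precedes it below -/
import Mathlib

section
/- Let 0 ≠ λ = (λₖ) ∈ ℓ¹ and set 𝔭 := 𝔭_λ. For every d ∈ ℕ there exists a linear map S_{λ,d} : X_d → X whose range is contained in span{x_{𝔭+1}, …, x_{𝔭+d}}, satisfying for every y ∈ X_d: (A1) T_λ(S_{λ,d}(y)) = y; (B1) ‖S_{λ,d}(y)‖ ≤ F_λ(d)·‖y‖; and (C1) if y ≠ 0 then the largest n with xₙ*(S_{λ,d}(y)) ≠ 0 equals 𝔭 + 𝔮_y, where 𝔮_y is the largest n with xₙ*(y) ≠ 0. -/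
open Filter Topology
open scoped ENNReal

instance : Fact ((1 : ℝ≥0∞) ≤ 1) := ⟨le_rfl⟩

/-!
On `span {x (p+1), …, x (p+d)}` the operator `T = ∑ f k • B ^ (k+1)` acts, after lowering the index
by `p + 1`, as an upper triangular matrix whose diagonal entries are `f p` times products of `p + 1`
consecutive weights.  Since the weights are at most `1`, each entry is at most `M / ‖f p‖` times the
diagonal entry of its row, where `M = max ‖f (p + i)‖`, so back substitution bounds `z` by `T z`.
The nonzero diagonal also makes `T` lower the last index of the support by exactly `p + 1`.  Hence
`T` is injective from `span {x (p+1), …, x (p+d)}` to `X_d`, and `S` is the inverse, since the two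
spaces have the same dimension.
-/

section BackSubstitution

theorem sum_Ico_le_mul_geom_sum {R : Type*} [CommSemiring R] [PartialOrder R] [IsOrderedRing R]
    {s : ℕ → R} {K r : R} {d : ℕ} (hr : 0 ≤ r)
    (hs : ∀ m < d, s m ≤ K + r * ∑ j ∈ Finset.Ico (m + 1) d, s j) {m : ℕ} (hm : m ≤ d) :
    ∑ j ∈ Finset.Ico m d, s j ≤ K * ∑ i ∈ Finset.range (d - m), (1 + r) ^ i := by
  induction hm using Nat.decreasingInduction with
  | self => simp
  | of_succ m hm ih =>
    calc ∑ j ∈ Finset.Ico m d, s j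
        = s m + ∑ j ∈ Finset.Ico (m + 1) d, s j := Finset.sum_eq_sum_Ico_succ_bot hm s
      _ ≤ (K + r * ∑ j ∈ Finset.Ico (m + 1) d, s j) + ∑ j ∈ Finset.Ico (m + 1) d, s j := by
        gcongr; exact hs m hm
      _ = K + (1 + r) * ∑ j ∈ Finset.Ico (m + 1) d, s j := by ring
      _ ≤ K + (1 + r) * (K * ∑ i ∈ Finset.range (d - (m + 1)), (1 + r) ^ i) := by
        have : 0 ≤ 1 + r := add_nonneg zero_le_one hr
        gcongr
      _ = K * ∑ i ∈ Finset.range (d - m), (1 + r) ^ i := by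
        rw [show d - m = d - (m + 1) + 1 by omega, geom_sum_succ]; ring

theorem geom_sum_one_add_le {r : ℝ} (hr : 1 ≤ r) (d : ℕ) :
    ∑ i ∈ Finset.range d, (1 + r) ^ i ≤ 2 ^ d * r ^ (d - 1) :=
  calc ∑ i ∈ Finset.range d, (1 + r) ^ i
      ≤ ∑ i ∈ Finset.range d, 2 ^ i * r ^ (d - 1) := by
        refine Finset.sum_le_sum fun i hi => ?_
        have hi : i ≤ d - 1 := by rw [Finset.mem_range] at hi; omega
        calc (1 + r) ^ i ≤ (2 * r) ^ i := by gcongr; linarith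
          _ = 2 ^ i * r ^ i := mul_pow 2 r i
          _ ≤ 2 ^ i * r ^ (d - 1) := by gcongr
    _ = (2 ^ d - 1) * r ^ (d - 1) := by
        rw [← Finset.sum_mul, geom_sum_eq (by norm_num)]; norm_num
    _ ≤ 2 ^ d * r ^ (d - 1) := by gcongr; linarith

theorem sum_norm_le_of_upperTriangular {𝕜 : Type*} [NormedField 𝕜] {A : ℕ → ℕ → 𝕜} {b c : ℕ → 𝕜}
    {d : ℕ} {r δ β : ℝ} (hr : 1 ≤ r) (hδ : 0 < δ) (hdiag : ∀ i < d, δ ≤ ‖A i i‖)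
    (hrow : ∀ i j, i ≤ j → j < d → ‖A i j‖ ≤ r * ‖A i i‖)
    (hb : ∀ i < d, b i = ∑ j ∈ Finset.Ico i d, A i j * c j)
    (hβ₀ : 0 ≤ β) (hβ : ∀ i < d, ‖b i‖ ≤ β) :
    ∑ j ∈ Finset.range d, ‖c j‖ ≤ β / δ * (2 ^ d * r ^ (d - 1)) := by
  have hr0 : 0 ≤ r := zero_le_one.trans hr
  have hrec : ∀ i < d, ‖c i‖ ≤ β / δ + r * ∑ j ∈ Finset.Ico (i + 1) d, ‖c j‖ := by
    intro i hi
    have hpos : 0 < ‖A i i‖ := hδ.trans_le (hdiag i hi)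
    have hsolve : A i i * c i = b i - ∑ j ∈ Finset.Ico (i + 1) d, A i j * c j := by
      rw [hb i hi, Finset.sum_eq_sum_Ico_succ_bot hi, add_sub_cancel_right]
    refine le_of_mul_le_mul_left ?_ hpos
    calc ‖A i i‖ * ‖c i‖ = ‖b i - ∑ j ∈ Finset.Ico (i + 1) d, A i j * c j‖ := by
          rw [← hsolve, norm_mul]
      _ ≤ ‖b i‖ + ∑ j ∈ Finset.Ico (i + 1) d, ‖A i j * c j‖ :=
          (norm_sub_le _ _).trans (by gcongr; exact norm_sum_le _ _)
      _ ≤ ‖A i i‖ * (β / δ) + ∑ j ∈ Finset.Ico (i + 1) d, r * ‖A i i‖ * ‖c j‖ := by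
          gcongr with j hj
          · calc ‖b i‖ ≤ δ * (β / δ) := by rw [mul_div_cancel₀ β hδ.ne']; exact hβ i hi
              _ ≤ ‖A i i‖ * (β / δ) := by gcongr; exact hdiag i hi
          · rw [Finset.mem_Ico] at hj
            rw [norm_mul]
            gcongr
            exact hrow i j (by omega) hj.2
      _ = ‖A i i‖ * (β / δ + r * ∑ j ∈ Finset.Ico (i + 1) d, ‖c j‖) := by
          rw [← Finset.mul_sum]; ring
  calc ∑ j ∈ Finset.range d, ‖c j‖
      ≤ β / δ * ∑ i ∈ Finset.range d, (1 + r) ^ i := by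
        simpa only [Nat.sub_zero, ← Finset.range_eq_Ico] using
          sum_Ico_le_mul_geom_sum hr0 hrec d.zero_le
    _ ≤ β / δ * (2 ^ d * r ^ (d - 1)) := by gcongr; exact geom_sum_one_add_le hr d

end BackSubstitution

section Biorthogonal

variable {ι R M F : Type*} [DecidableEq ι] [Ring R] [AddCommGroup M] [Module R M] [FunLike F M R]

/-- The functionals `xs` are biorthogonal to the vectors `x`.  They are taken in any `FunLike` type
so that the notion covers both `Module.Dual` and continuous functionals. -/
def Biorthogonal (xs : ι → F) (x : ι → M) : Prop :=
  ∀ m n, xs m (x n) = if m = n then 1 else 0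

namespace Biorthogonal

variable [LinearMapClass F R M R] {xs : ι → F} {x : ι → M}

theorem linearIndependent (h : Biorthogonal xs x) : LinearIndependent R x :=
  .of_pairwise_dual_eq_zero_one x (fun i => (xs i : M →ₗ[R] R))
    (fun i j hij => by simp [h i j, hij]) fun i => by simp [h i i]

theorem apply_eq_zero_of_mem_span (h : Biorthogonal xs x) {I : Set ι} {z : M}
    (hz : z ∈ Submodule.span R (x '' I)) {n : ι} (hn : n ∉ I) : xs n z = 0 := by
  have hle : Submodule.span R (x '' I) ≤ LinearMap.ker (xs n : M →ₗ[R] R) := by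
    rw [Submodule.span_le]
    rintro _ ⟨m, hm, rfl⟩
    have hnm : n ≠ m := fun hnm => hn (hnm ▸ hm)
    simp [h n m, hnm]
  simpa using hle hz

theorem sum_smul_eq_of_mem_span (h : Biorthogonal xs x) {I : Finset ι} {z : M}
    (hz : z ∈ Submodule.span R (x '' I)) : ∑ n ∈ I, xs n z • x n = z := by
  induction hz using Submodule.span_induction with
  | mem _ hm =>
    obtain ⟨m, hm, rfl⟩ := hm
    simp [h _ m, Finset.mem_coe.1 hm]
  | zero => simp
  | add y z _ _ hy hz => simp only [map_add, add_smul, Finset.sum_add_distrib, hy, hz]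
  | smul a z _ hz => simp only [map_smul, smul_assoc, ← Finset.smul_sum, hz]

theorem finrank_span_image [Nontrivial R] [StrongRankCondition R] (h : Biorthogonal xs x)
    (I : Finset ι) : Module.finrank R (Submodule.span R (x '' I)) = I.card := by
  have hI : LinearIndependent R fun i : I => x i :=
    h.linearIndependent.comp _ Subtype.val_injective
  rw [Set.image_eq_range]
  exact (finrank_span_eq_card hI).trans (Fintype.card_coe I)

theorem exists_isGreatest_support {ι : Type*} [LinearOrder ι] {xs : ι → F} {x : ι → M}
    (h : Biorthogonal xs x) {I : Finset ι} {z : M} (hz : z ∈ Submodule.span R (x '' I))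
    (hz0 : z ≠ 0) : ∃ q ∈ I, IsGreatest {n | xs n z ≠ 0} q := by
  have hsub {n : ι} (hn : xs n z ≠ 0) : n ∈ I :=
    by_contra fun h_notMem => hn (h.apply_eq_zero_of_mem_span hz h_notMem)
  rw [← h.sum_smul_eq_of_mem_span hz] at hz0
  obtain ⟨n, _, hn⟩ := Finset.exists_ne_zero_of_sum_ne_zero hz0
  have hfin : {n | xs n z ≠ 0}.Finite := I.finite_toSet.subset fun _ => hsub
  obtain ⟨q, hq, hub⟩ := Set.exists_max_image _ id hfin ⟨n, left_ne_zero_of_smul hn⟩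
  exact ⟨q, hsub hq, hq, hub⟩

theorem exists_isGreatest_support_add {xs : ℕ → F} {x : ℕ → M} (h : Biorthogonal xs x) {s d : ℕ}
    {z : M} (hz : z ∈ Submodule.span R (x '' Set.Ico s (s + d))) (hz0 : z ≠ 0) :
    ∃ q, IsGreatest {n | xs n z ≠ 0} (s + q) := by
  rw [← Finset.coe_Ico] at hz
  obtain ⟨n, hn, hgreatest⟩ := h.exists_isGreatest_support hz hz0
  obtain ⟨q, rfl⟩ := Nat.exists_eq_add_of_le (Finset.mem_Ico.1 hn).1
  exact ⟨q, hgreatest⟩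

end Biorthogonal

end Biorthogonal

section ShiftedTriangular

/-- `T` is upper triangular with matrix `A` after lowering indices by `s`: it maps `x (s + j)` to
the combination of `x 0, …, x j` given by column `j` of `A`.  Entries of `A` below the diagonal
play no role. -/
def IsShiftedTriangular {R M : Type*} [Semiring R] [AddCommMonoid M] [Module R M]
    (T : M →ₗ[R] M) (x : ℕ → M) (s : ℕ) (A : ℕ → ℕ → R) : Prop :=
  ∀ j, T (x (s + j)) = ∑ i ∈ Finset.range (j + 1), A i j • x i

namespace IsShiftedTriangular

section Algebra

variable {K M F : Type*} [Field K] [AddCommGroup M] [Module K M] [FunLike F M K]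
  {T : M →ₗ[K] M} {x : ℕ → M} {xs : ℕ → F} {s d : ℕ} {A : ℕ → ℕ → K}

theorem map_mem_span (hT : IsShiftedTriangular T x s A) {z : M}
    (hz : z ∈ Submodule.span K (x '' Set.Ico s (s + d))) :
    T z ∈ Submodule.span K (x '' Set.Iio d) := by
  have hle : Submodule.span K (x '' Set.Ico s (s + d)) ≤
      (Submodule.span K (x '' Set.Iio d)).comap T := by
    rw [Submodule.span_le]
    rintro _ ⟨n, ⟨hsn, hnd⟩, rfl⟩
    obtain ⟨j, rfl⟩ := Nat.exists_eq_add_of_le hsn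
    rw [SetLike.mem_coe, Submodule.mem_comap, hT j]
    refine Submodule.sum_smul_mem _ _ fun i hi => Submodule.subset_span ⟨i, ?_, rfl⟩
    rw [Finset.mem_range] at hi
    rw [Set.mem_Iio]
    omega
  exact hle hz

variable [LinearMapClass F K M K]

theorem apply_map (hT : IsShiftedTriangular T x s A) (hx : Biorthogonal xs x) {z : M}
    (hz : z ∈ Submodule.span K (x '' Set.Ico s (s + d))) (i : ℕ) :
    xs i (T z) = ∑ j ∈ Finset.Ico i d, A i j * xs (s + j) z := by
  have hexp : ∑ j ∈ Finset.range d, xs (s + j) z • x (s + j) = z := by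
    rw [← Finset.coe_Ico] at hz
    simpa [Finset.sum_Ico_eq_sum_range] using hx.sum_smul_eq_of_mem_span hz
  have hcol (j : ℕ) : xs i (T (x (s + j))) = if i ≤ j then A i j else 0 := by
    simp [hT j, hx i, Order.lt_add_one_iff]
  calc xs i (T z) = xs i (T (∑ j ∈ Finset.range d, xs (s + j) z • x (s + j))) := by rw [hexp]
    _ = ∑ j ∈ Finset.range d, if i ≤ j then A i j * xs (s + j) z else 0 := by
      simp [hcol, mul_comm]
    _ = ∑ j ∈ Finset.Ico i d, A i j * xs (s + j) z := by
      rw [← Finset.sum_filter]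
      congr 1
      ext j
      simp [and_comm]

theorem isGreatest_support_map (hT : IsShiftedTriangular T x s A) (hx : Biorthogonal xs x)
    (hdiag : ∀ i < d, A i i ≠ 0) {z : M} (hz : z ∈ Submodule.span K (x '' Set.Ico s (s + d)))
    {q : ℕ} (hq : IsGreatest {n | xs n z ≠ 0} (s + q)) : IsGreatest {n | xs n (T z) ≠ 0} q := by
  obtain ⟨hne, hub⟩ := hq
  have hzero {j : ℕ} (hj : q < j) : xs (s + j) z = 0 := by
    by_contra h
    have : s + j ≤ s + q := hub h
    omega
  have hqd : q < d := by
    by_contra h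
    exact hne (hx.apply_eq_zero_of_mem_span hz fun hmem => by rw [Set.mem_Ico] at hmem; omega)
  refine ⟨?_, fun n hn => ?_⟩
  · have htop : xs q (T z) = A q q * xs (s + q) z := by
      rw [hT.apply_map hx hz, Finset.sum_eq_sum_Ico_succ_bot hqd, Finset.sum_eq_zero, add_zero]
      intro j hj
      rw [hzero (Finset.mem_Ico.1 hj).1, mul_zero]
    rw [Set.mem_ofPred_eq, htop]
    exact mul_ne_zero (hdiag q hqd) hne
  · by_contra! hqn
    refine hn ((hT.apply_map hx hz n).trans (Finset.sum_eq_zero fun j hj => ?_))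
    rw [hzero (hqn.trans_le (Finset.mem_Ico.1 hj).1), mul_zero]

theorem isGreatest_support_iff (hT : IsShiftedTriangular T x s A) (hx : Biorthogonal xs x)
    (hdiag : ∀ i < d, A i i ≠ 0) {z : M} (hz : z ∈ Submodule.span K (x '' Set.Ico s (s + d)))
    {q : ℕ} : IsGreatest {n | xs n (T z) ≠ 0} q ↔ IsGreatest {n | xs n z ≠ 0} (s + q) := by
  refine ⟨fun hq => ?_, hT.isGreatest_support_map hx hdiag hz⟩
  have hz0 : z ≠ 0 := by
    rintro rfl
    exact hq.1 (by simp)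
  obtain ⟨q', hq'⟩ := hx.exists_isGreatest_support_add hz hz0
  rwa [hq.unique (hT.isGreatest_support_map hx hdiag hz hq')]

theorem eq_zero_of_map_eq_zero (hT : IsShiftedTriangular T x s A) (hx : Biorthogonal xs x)
    (hdiag : ∀ i < d, A i i ≠ 0) {z : M} (hz : z ∈ Submodule.span K (x '' Set.Ico s (s + d)))
    (hTz : T z = 0) : z = 0 := by
  by_contra hz0
  obtain ⟨q, hq⟩ := hx.exists_isGreatest_support_add hz hz0
  exact (hT.isGreatest_support_map hx hdiag hz hq).1 (by rw [hTz, map_zero])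

theorem exists_rightInverse (hT : IsShiftedTriangular T x s A) (hx : Biorthogonal xs x)
    (hdiag : ∀ i < d, A i i ≠ 0) :
    ∃ S : Submodule.span K (x '' Set.Iio d) →ₗ[K] M,
      (∀ y, S y ∈ Submodule.span K (x '' Set.Ico s (s + d))) ∧ ∀ y, T (S y) = y := by
  let T' : Submodule.span K (x '' Set.Ico s (s + d)) →ₗ[K] Submodule.span K (x '' Set.Iio d) :=
    T.restrict fun _ => hT.map_mem_span
  have hinj : Function.Injective T' := by
    refine (injective_iff_map_eq_zero T').2 fun z hTz => ?_
    exact Subtype.ext (hT.eq_zero_of_map_eq_zero hx hdiag z.2 (congrArg Subtype.val hTz))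
  have hfinrank : Module.finrank K (Submodule.span K (x '' Set.Ico s (s + d))) =
      Module.finrank K (Submodule.span K (x '' Set.Iio d)) := by
    rw [← Finset.coe_Ico, ← Finset.coe_Iio, hx.finrank_span_image, hx.finrank_span_image]
    simp
  have : FiniteDimensional K (Submodule.span K (x '' Set.Iio d)) :=
    .span_of_finite K ((Set.finite_Iio d).image x)
  let e := LinearEquiv.ofInjectiveOfFinrankEq T' hinj hfinrank
  refine ⟨(Submodule.subtype _).comp e.symm.toLinearMap, fun y => (e.symm y).2, fun y => ?_⟩
  exact congrArg Subtype.val (e.apply_symm_apply y)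

end Algebra

theorem norm_le_mul_norm_map {𝕜 X : Type*} [NontriviallyNormedField 𝕜] [SeminormedAddCommGroup X]
    [NormedSpace 𝕜 X] {T : X →ₗ[𝕜] X} {x : ℕ → X} {xs : ℕ → X →L[𝕜] 𝕜} {s d : ℕ}
    {A : ℕ → ℕ → 𝕜} {C r δ : ℝ} (hT : IsShiftedTriangular T x s A) (hx : Biorthogonal xs x)
    (hx_norm : ∀ n, ‖x n‖ ≤ 1) (hxs_norm : ∀ n, ‖xs n‖ ≤ C)
    (hr : 1 ≤ r) (hδ : 0 < δ) (hdiag : ∀ i < d, δ ≤ ‖A i i‖)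
    (hrow : ∀ i j, i ≤ j → j < d → ‖A i j‖ ≤ r * ‖A i i‖)
    {z : X} (hz : z ∈ Submodule.span 𝕜 (x '' Set.Ico s (s + d))) :
    ‖z‖ ≤ C / δ * (2 ^ d * r ^ (d - 1)) * ‖T z‖ := by
  have hC : 0 ≤ C := (norm_nonneg _).trans (hxs_norm 0)
  have hsum : ∑ j ∈ Finset.range d, ‖xs (s + j) z‖ ≤ C * ‖T z‖ / δ * (2 ^ d * r ^ (d - 1)) :=
    sum_norm_le_of_upperTriangular hr hδ hdiag hrow (fun i _ => hT.apply_map hx hz i)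
      (by positivity) fun i _ => (xs i).le_of_opNorm_le (hxs_norm i) (T z)
  calc ‖z‖ = ‖∑ n ∈ Finset.Ico s (s + d), xs n z • x n‖ := by
        rw [hx.sum_smul_eq_of_mem_span (by rwa [Finset.coe_Ico])]
    _ ≤ ∑ n ∈ Finset.Ico s (s + d), ‖xs n z‖ := norm_sum_le_of_le _ fun n _ => by
        rw [norm_smul]
        exact mul_le_of_le_one_right (norm_nonneg _) (hx_norm n)
    _ = ∑ j ∈ Finset.range d, ‖xs (s + j) z‖ := by
        rw [Finset.sum_Ico_eq_sum_range, Nat.add_sub_cancel_left]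
    _ ≤ C * ‖T z‖ / δ * (2 ^ d * r ^ (d - 1)) := hsum
    _ = C / δ * (2 ^ d * r ^ (d - 1)) * ‖T z‖ := by ring

end IsShiftedTriangular

end ShiftedTriangular

section BackwardShift

theorem summable_smul_pow_succ {𝕜 A : Type*} [NormedField 𝕜] [NormedRing A] [NormedSpace 𝕜 A]
    [CompleteSpace A] {c : ℕ → 𝕜} (hc : Summable fun k => ‖c k‖) {a : A} (ha : ‖a‖ ≤ 1) :
    Summable fun k => c k • a ^ (k + 1) :=
  .of_norm_bounded hc fun k => by
    have hpow : ‖a ^ (k + 1)‖ ≤ 1 :=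
      (norm_pow_le' a k.succ_pos).trans (pow_le_one₀ (norm_nonneg a) ha)
    exact (norm_smul_le _ _).trans (mul_le_of_le_one_right (norm_nonneg _) hpow)

section Algebra

variable {R M : Type*} [CommSemiring R] [TopologicalSpace M] [AddCommMonoid M] [Module R M]

/-- `B` acts on the sequence `x` as the backward shift with weights `w`. -/
structure IsBackwardShift (B : M →L[R] M) (w : ℕ → R) (x : ℕ → M) : Prop where
  apply_zero : B (x 0) = 0
  apply_succ : ∀ n, B (x (n + 1)) = w n • x n

namespace IsBackwardShift

variable {B : M →L[R] M} {w : ℕ → R} {x : ℕ → M}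

theorem pow_apply_add (hB : IsBackwardShift B w x) (k n : ℕ) :
    (B ^ k) (x (n + k)) = (∏ l ∈ Finset.Ico n (n + k), w l) • x n := by
  induction k with
  | zero => simp
  | succ k ih =>
    rw [pow_succ, mul_apply_eq_comp, ← add_assoc, hB.apply_succ, map_smul, ih,
      smul_smul, Finset.prod_Ico_succ_top (by omega), mul_comm]

theorem pow_apply_of_lt (hB : IsBackwardShift B w x) {k n : ℕ} (hn : n < k) :
    (B ^ k) (x n) = 0 := by
  obtain ⟨m, rfl⟩ := Nat.exists_eq_add_of_lt hn
  have hvanish : (B ^ n) (x n) = (∏ l ∈ Finset.Ico 0 n, w l) • x 0 := by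
    simpa using hB.pow_apply_add n 0
  rw [show n + m + 1 = m + 1 + n by omega, pow_add, mul_apply_eq_comp, hvanish, pow_succ,
    map_smul, mul_apply_eq_comp, hB.apply_zero, map_zero, smul_zero]

end IsBackwardShift

end Algebra

variable {𝕜 X : Type*} [NontriviallyNormedField 𝕜] [NormedAddCommGroup X] [NormedSpace 𝕜 X]

/-- The operator `T_λ = ∑ λ_k B ^ k`, where `c k` is the coefficient `λ_{k+1}` since the series has
no constant term.  It is `0` when the series diverges in operator norm. -/
noncomputable def shiftSeries (c : ℕ → 𝕜) (B : X →L[𝕜] X) : X →L[𝕜] X :=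
  ∑' k, c k • B ^ (k + 1)

/-- The matrix of `shiftSeries c B` after lowering indices by `p + 1`, for `B` a backward shift with
weights `w` and `c` vanishing below `p`; meaningful only for `i ≤ j`. -/
def shiftSeriesMatrix {R : Type*} [CommMonoid R] (c w : ℕ → R) (p i j : ℕ) : R :=
  c (p + (j - i)) * ∏ l ∈ Finset.Ico i (p + 1 + j), w l

namespace IsBackwardShift

variable {B : X →L[𝕜] X} {w : ℕ → 𝕜} {x : ℕ → X}

theorem shiftSeries_apply [CompleteSpace X] (hB : IsBackwardShift B w x) (hB_norm : ‖B‖ ≤ 1)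
    {c : ℕ → 𝕜} (hc : Summable fun k => ‖c k‖) (n : ℕ) :
    shiftSeries c B (x n) =
      ∑ i ∈ Finset.range n, (c (n - 1 - i) * ∏ l ∈ Finset.Ico i n, w l) • x i := by
  have happly : shiftSeries c B (x n) = ∑' k, c k • (B ^ (k + 1)) (x n) :=
    (ContinuousLinearMap.apply 𝕜 X (x n)).map_tsum (summable_smul_pow_succ hc hB_norm)
  rw [happly, tsum_eq_sum (s := Finset.range n), ← Finset.sum_range_reflect]
  · refine Finset.sum_congr rfl fun i hi => ?_
    rw [Finset.mem_range] at hi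
    have hpow := hB.pow_apply_add (n - i) i
    rw [Nat.add_sub_of_le hi.le] at hpow
    rw [show n - 1 - i + 1 = n - i by omega, hpow, smul_smul]
  · intro k hk
    rw [Finset.mem_range, not_lt] at hk
    rw [hB.pow_apply_of_lt (by omega), smul_zero]

theorem isShiftedTriangular_shiftSeries [CompleteSpace X] (hB : IsBackwardShift B w x)
    (hB_norm : ‖B‖ ≤ 1) {c : ℕ → 𝕜} (hc : Summable fun k => ‖c k‖) {p : ℕ}
    (hcp : ∀ k < p, c k = 0) :
    IsShiftedTriangular (shiftSeries c B : X →ₗ[𝕜] X) x (p + 1) (shiftSeriesMatrix c w p) := by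
  intro j
  rw [ContinuousLinearMap.coe_coe, hB.shiftSeries_apply hB_norm hc]
  symm
  refine Finset.sum_subset_zero_on_sdiff (Finset.range_mono (by omega)) (fun i hi => ?_)
    fun i hi => ?_
  · rw [Finset.mem_sdiff, Finset.mem_range, Finset.mem_range] at hi
    rw [hcp _ (by omega), zero_mul, zero_smul]
  · rw [Finset.mem_range] at hi
    rw [shiftSeriesMatrix, show p + 1 + j - 1 - i = p + (j - i) by omega]

end IsBackwardShift

theorem Biorthogonal.isBackwardShift_of_apply_eq_tsum {xs : ℕ → X →L[𝕜] 𝕜} {x : ℕ → X}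
    (hx : Biorthogonal xs x) {w : ℕ → 𝕜} {B : X →L[𝕜] X}
    (hB : ∀ z, B z = ∑' n, (w n * xs (n + 1) z) • x n) : IsBackwardShift B w x where
  apply_zero := by simp [hB, hx _ 0]
  apply_succ n := by
    rw [hB, tsum_eq_single n fun m hm => by simp [hx _ (n + 1), hm]]
    simp [hx _ (n + 1)]

theorem norm_le_one_of_apply_eq_tsum {xs : ℕ → X →L[𝕜] 𝕜} {x : ℕ → X} {C : ℝ}
    (hx_norm : ∀ n, ‖x n‖ ≤ 1) (hxs_norm : ∀ n, ‖xs n‖ ≤ C) {w : ℕ → 𝕜}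
    (hw : Summable fun n => ‖w n‖) (hw_le : ∑' n, ‖w n‖ ≤ C⁻¹) {B : X →L[𝕜] X}
    (hB : ∀ z, B z = ∑' n, (w n * xs (n + 1) z) • x n) : ‖B‖ ≤ 1 := by
  have hC : 0 ≤ C := (norm_nonneg _).trans (hxs_norm 0)
  refine B.opNorm_le_bound zero_le_one fun z => ?_
  have hterm (n : ℕ) : ‖(w n * xs (n + 1) z) • x n‖ ≤ ‖w n‖ * (C * ‖z‖) :=
    calc ‖(w n * xs (n + 1) z) • x n‖ = ‖w n‖ * ‖xs (n + 1) z‖ * ‖x n‖ := by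
          rw [norm_smul, norm_mul]
      _ ≤ ‖w n‖ * (C * ‖z‖) * 1 := by
          gcongr
          · exact (xs (n + 1)).le_of_opNorm_le (hxs_norm _) z
          · exact hx_norm n
      _ = ‖w n‖ * (C * ‖z‖) := mul_one _
  calc ‖B z‖ ≤ (∑' n, ‖w n‖) * (C * ‖z‖) := by
        rw [hB]
        exact tsum_of_norm_bounded (hw.hasSum.mul_right _) hterm
    _ ≤ C⁻¹ * (C * ‖z‖) := by gcongr
    _ = C⁻¹ * C * ‖z‖ := (mul_assoc _ _ _).symm
    _ ≤ 1 * ‖z‖ := by gcongr; exact inv_mul_le_one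

end BackwardShift

section MatrixBounds

variable {𝕜 : Type*} [NormedField 𝕜] {c w : ℕ → 𝕜} {p d : ℕ}

theorem shiftSeriesMatrix_self_ne_zero (hcp : c p ≠ 0) (hw : ∀ n, w n ≠ 0) (i : ℕ) :
    shiftSeriesMatrix c w p i i ≠ 0 := by
  rw [shiftSeriesMatrix, Nat.sub_self]
  exact mul_ne_zero hcp (Finset.prod_ne_zero_iff.2 fun l _ => hw l)

theorem mul_pow_le_norm_shiftSeriesMatrix_self (hw : Antitone fun n => ‖w n‖) {i : ℕ}
    (hi : i < d) : ‖c p‖ * ‖w (p + d)‖ ^ (p + 1) ≤ ‖shiftSeriesMatrix c w p i i‖ := by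
  rw [shiftSeriesMatrix, Nat.sub_self, add_zero, norm_mul, norm_prod]
  gcongr
  calc ‖w (p + d)‖ ^ (p + 1) = ∏ _l ∈ Finset.Ico i (p + 1 + i), ‖w (p + d)‖ := by simp
    _ ≤ ∏ l ∈ Finset.Ico i (p + 1 + i), ‖w l‖ :=
      Finset.prod_le_prod (fun _ _ => norm_nonneg _) fun l hl => by
        rw [Finset.mem_Ico] at hl
        exact hw (by omega)

theorem norm_shiftSeriesMatrix_le (hcp : c p ≠ 0) (hw : ∀ n, ‖w n‖ ≤ 1) {m : ℝ}
    (hm : ∀ k < d, ‖c (p + k)‖ ≤ m) {i j : ℕ} (hij : i ≤ j) (hj : j < d) :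
    ‖shiftSeriesMatrix c w p i j‖ ≤ m / ‖c p‖ * ‖shiftSeriesMatrix c w p i i‖ := by
  have hprod : ∏ l ∈ Finset.Ico i (p + 1 + j), ‖w l‖ ≤ ∏ l ∈ Finset.Ico i (p + 1 + i), ‖w l‖ :=
    Finset.prod_le_prod_of_subset_of_le_one (Finset.Ico_subset_Ico_right (by omega))
      (fun _ _ => norm_nonneg _) fun l _ _ => hw l
  calc ‖shiftSeriesMatrix c w p i j‖
      = ‖c (p + (j - i))‖ * ∏ l ∈ Finset.Ico i (p + 1 + j), ‖w l‖ := by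
        rw [shiftSeriesMatrix, norm_mul, norm_prod]
    _ ≤ m * ∏ l ∈ Finset.Ico i (p + 1 + i), ‖w l‖ := by
        have := hm (j - i) (by omega)
        gcongr
        exact (norm_nonneg _).trans this
    _ = m / ‖c p‖ * ‖shiftSeriesMatrix c w p i i‖ := by
        rw [shiftSeriesMatrix, Nat.sub_self, add_zero, norm_mul, norm_prod, ← mul_assoc,
          div_mul_cancel₀ m (norm_ne_zero_iff.2 hcp)]

end MatrixBounds

section LocalInverse

/-- The paper's constant `F_λ(d)`, in the 0-based indexing `c k = λ_{k+1}` and `p + 1 = 𝔭_λ`. -/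
noncomputable def localInverseBound {𝕜 : Type*} [Norm 𝕜] (C : ℝ) (c w : ℕ → 𝕜) (p d : ℕ) : ℝ :=
  C * (Nat.factorial (d + 1) : ℝ) * (⨆ i : Fin d, ‖c (p + i)‖) ^ (d - 1) /
    (‖c p‖ ^ d * ‖w (p + d)‖ ^ (d * (p + 1)))

theorem two_pow_le_factorial_succ (d : ℕ) : 2 ^ d ≤ Nat.factorial (d + 1) := by
  simpa [add_comm] using Nat.factorial_mul_pow_le_factorial (m := 1) (n := d)

theorem le_localInverseBound {𝕜 : Type*} [NormedField 𝕜] {C : ℝ} (hC : 0 ≤ C) {c w : ℕ → 𝕜}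
    {p d : ℕ} (hcp : c p ≠ 0) (hw : w (p + d) ≠ 0) (hw_le : ‖w (p + d)‖ ≤ 1) (hd : 1 ≤ d) :
    C / (‖c p‖ * ‖w (p + d)‖ ^ (p + 1)) *
        (2 ^ d * ((⨆ i : Fin d, ‖c (p + i)‖) / ‖c p‖) ^ (d - 1)) ≤
      localInverseBound C c w p d := by
  have hM : 0 ≤ ⨆ i : Fin d, ‖c (p + i)‖ := Real.iSup_nonneg fun _ => norm_nonneg _
  have hw_pos : 0 < ‖w (p + d)‖ := norm_pos_iff.2 hw
  have hpow : ‖w (p + d)‖ ^ (d * (p + 1)) ≤ ‖w (p + d)‖ ^ (p + 1) :=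
    pow_le_pow_of_le_one hw_pos.le hw_le (Nat.le_mul_of_pos_left _ hd)
  have hfac : (2 : ℝ) ^ d ≤ Nat.factorial (d + 1) := mod_cast two_pow_le_factorial_succ d
  set M := ⨆ i : Fin d, ‖c (p + i)‖
  calc C / (‖c p‖ * ‖w (p + d)‖ ^ (p + 1)) * (2 ^ d * (M / ‖c p‖) ^ (d - 1))
      = C * 2 ^ d * M ^ (d - 1) / (‖c p‖ ^ d * ‖w (p + d)‖ ^ (p + 1)) := by
        rw [div_pow, ← mul_pow_sub_one (Nat.one_le_iff_ne_zero.1 hd) ‖c p‖]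
        field_simp
    _ ≤ C * Nat.factorial (d + 1) * M ^ (d - 1) /
          (‖c p‖ ^ d * ‖w (p + d)‖ ^ (d * (p + 1))) := by gcongr

variable {𝕜 : Type*} [NontriviallyNormedField 𝕜] {X : Type*} [NormedAddCommGroup X]
  [NormedSpace 𝕜 X] {x : ℕ → X} {xs : ℕ → X →L[𝕜] 𝕜} {C : ℝ}

theorem Biorthogonal.one_le_of_norm_le (hx : Biorthogonal xs x) (hx_norm : ∀ n, ‖x n‖ ≤ 1)
    (hxs_norm : ∀ n, ‖xs n‖ ≤ C) : 1 ≤ C :=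
  calc (1 : ℝ) = ‖xs 0 (x 0)‖ := by simp [hx 0 0]
    _ ≤ C * 1 := (xs 0).le_of_opNorm_le_of_le (hxs_norm 0) (hx_norm 0)
    _ = C := mul_one C

theorem norm_le_localInverseBound_mul {T : X →ₗ[𝕜] X} {c w : ℕ → 𝕜} {p d : ℕ}
    (hT : IsShiftedTriangular T x (p + 1) (shiftSeriesMatrix c w p))
    (hx : Biorthogonal xs x) (hx_norm : ∀ n, ‖x n‖ ≤ 1) (hxs_norm : ∀ n, ‖xs n‖ ≤ C)
    (hcp : c p ≠ 0) (hw_ne : ∀ n, w n ≠ 0) (hw_anti : Antitone fun n => ‖w n‖)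
    (hw_le : ∀ n, ‖w n‖ ≤ 1) (hd : 1 ≤ d)
    {z : X} (hz : z ∈ Submodule.span 𝕜 (x '' Set.Ico (p + 1) (p + 1 + d))) :
    ‖z‖ ≤ localInverseBound C c w p d * ‖T z‖ := by
  have hc_pos : 0 < ‖c p‖ := norm_pos_iff.2 hcp
  have hw_pos : 0 < ‖w (p + d)‖ := norm_pos_iff.2 (hw_ne _)
  have hM (k : ℕ) (hk : k < d) : ‖c (p + k)‖ ≤ ⨆ i : Fin d, ‖c (p + i)‖ :=
    le_ciSup (f := fun i : Fin d => ‖c (p + i)‖) (Set.finite_range _).bddAbove ⟨k, hk⟩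
  have hC : 0 ≤ C := zero_le_one.trans (hx.one_le_of_norm_le hx_norm hxs_norm)
  refine (hT.norm_le_mul_norm_map hx hx_norm hxs_norm ((one_le_div hc_pos).2 (hM 0 hd))
    (by positivity) (fun i hi => mul_pow_le_norm_shiftSeriesMatrix_self hw_anti hi)
    (fun i j hij hj => norm_shiftSeriesMatrix_le hcp hw_le hM hij hj) hz).trans ?_
  gcongr
  exact le_localInverseBound hC hcp (hw_ne _) (hw_le _) hd

end LocalInverse

theorem exists_local_right_inverse_general
    {𝕜 : Type*} [NontriviallyNormedField 𝕜] {X : Type*} [NormedAddCommGroup X] [NormedSpace 𝕜 X]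
    [CompleteSpace X]
    (x : ℕ → X) (xs : ℕ → X →L[𝕜] 𝕜) (C : ℝ)
    (hx_norm : ∀ n, ‖x n‖ ≤ 1) (hxs_norm : ∀ n, ‖xs n‖ ≤ C) (hx : Biorthogonal xs x)
    (w : ℕ → 𝕜) (hw_ne : ∀ n, w n ≠ 0) (hw_anti : Antitone fun n => ‖w n‖)
    (hw_sum : Summable fun n => ‖w n‖) (hw_le : ∑' n, ‖w n‖ ≤ C⁻¹)
    (B : X →L[𝕜] X) (hB : ∀ z, B z = ∑' n, (w n * xs (n + 1) z) • x n)
    (c : ℕ → 𝕜) (hc : Summable fun k => ‖c k‖) (p : ℕ) (hcp : c p ≠ 0) (hcp' : ∀ k < p, c k = 0)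
    (d : ℕ) (hd : 1 ≤ d) :
    ∃ S : Submodule.span 𝕜 (x '' Set.Iio d) →ₗ[𝕜] X,
      (∀ y, S y ∈ Submodule.span 𝕜 (x '' Set.Icc (p + 1) (p + d))) ∧
      (∀ y, shiftSeries c B (S y) = y) ∧
      (∀ y, ‖S y‖ ≤ localInverseBound C c w p d * ‖(y : X)‖) ∧
      ∀ (y : Submodule.span 𝕜 (x '' Set.Iio d)) (q : ℕ), IsGreatest {n | xs n (y : X) ≠ 0} q →
        IsGreatest {n | xs n (S y) ≠ 0} (p + q + 1) := by
  have hC : 1 ≤ C := hx.one_le_of_norm_le hx_norm hxs_norm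
  have hw_one (n : ℕ) : ‖w n‖ ≤ 1 :=
    (hw_sum.le_tsum n fun _ _ => norm_nonneg _).trans (hw_le.trans (inv_le_one_of_one_le₀ hC))
  have hT := (hx.isBackwardShift_of_apply_eq_tsum hB).isShiftedTriangular_shiftSeries
    (norm_le_one_of_apply_eq_tsum hx_norm hxs_norm hw_sum hw_le hB) hc hcp'
  have hdiag (i : ℕ) (_ : i < d) : shiftSeriesMatrix c w p i i ≠ 0 :=
    shiftSeriesMatrix_self_ne_zero hcp hw_ne i
  obtain ⟨S, hS_mem, hTS⟩ := hT.exists_rightInverse hx hdiag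
  have hIcc : Set.Icc (p + 1) (p + d) = Set.Ico (p + 1) (p + 1 + d) := by
    ext
    rw [Set.mem_Icc, Set.mem_Ico]
    omega
  refine ⟨S, fun y => hIcc ▸ hS_mem y, hTS, fun y => ?_, fun y q hq => ?_⟩
  · rw [← hTS y]
    exact norm_le_localInverseBound_mul hT hx hx_norm hxs_norm hcp hw_ne hw_anti hw_one hd
      (hS_mem y)
  · rw [← hTS y, hT.isGreatest_support_iff hx hdiag (hS_mem y)] at hq
    rwa [add_right_comm]

/-- (Indices are 0-based: `x n` is the paper's `x_{n+1}`, the coefficient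
`f k` multiplies `B_w^{k+1}`, and `f p ≠ 0` with `f k = 0` for `k < p` means the paper's
`𝔭_λ = p + 1`.  The paper's `X_d = span{x_1, …, x_d}` becomes the span of `x '' Set.Iio d`,
the target `span{x_{𝔭+1}, …, x_{𝔭+d}}` becomes the span of `x '' Set.Icc (p+1) (p+d)`, and
the paper's conclusion `𝔮_{S y} = 𝔭_λ + 𝔮_y` becomes `q_{S y} = p + q_y + 1` for the 0-based
largest support indices.)  For every nonzero `f ∈ ℓ¹` and every `d ≥ 1` there is a linear map
`S : X_d → X` with range in `span{x (p+1), …, x (p+d)}` such that for all `y ∈ X_d`: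
(A1) `T_f (S y) = y`;  (B1) `‖S y‖ ≤ F_f(d) · ‖y‖`;  (C1) if `y ≠ 0` then the largest `n`
with `xs n (S y) ≠ 0` equals `p + q + 1`, where `q` is the largest `n` with `xs n y ≠ 0`. -/
theorem exists_local_right_inverse
    {𝕜 : Type*} [RCLike 𝕜] {X : Type*} [NormedAddCommGroup X] [NormedSpace 𝕜 X]
    [CompleteSpace X]
    (x : ℕ → X) (xs : ℕ → X →L[𝕜] 𝕜) (C : ℝ)
    (hx : ∀ n, ‖x n‖ = 1)
    (hxs : ∀ n, ‖xs n‖ ≤ C)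
    (hbi : ∀ m n, xs m (x n) = if m = n then 1 else 0)
    (hdense : Dense (Submodule.span 𝕜 (Set.range x) : Set X))
    (hsep : ∀ z : X, (∀ n, xs n z = 0) → z = 0)
    (w : ℕ → ℝ)
    (hw_pos : ∀ n, 0 < w n)
    (hw_anti : StrictAnti w)
    (hw_lim : Tendsto w atTop (nhds 0))
    (hw_sum : Summable w)
    (hw_le : ∑' n, w n ≤ C⁻¹)
    (B : X →L[𝕜] X)
    (hB : ∀ z : X, B z = ∑' n : ℕ, ((w n : 𝕜) * xs (n + 1) z) • x n)
    (f : lp (fun _ : ℕ => 𝕜) 1)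
    (p : ℕ) (hp : f p ≠ 0) (hp' : ∀ k < p, f k = 0)
    (F : ℕ → ℝ)
    (hF : ∀ d : ℕ,
      F d = C * (Nat.factorial (d + 1) : ℝ) * (⨆ i : Fin d, ‖f (p + (i : ℕ))‖) ^ (d - 1) /
        (‖f p‖ ^ d * (w (p + d)) ^ (d * (p + 1)))) :
    ∀ d : ℕ, 1 ≤ d →
      ∃ S : (Submodule.span 𝕜 (x '' Set.Iio d)) →ₗ[𝕜] X,
        (∀ y : Submodule.span 𝕜 (x '' Set.Iio d),
          S y ∈ Submodule.span 𝕜 (x '' Set.Icc (p + 1) (p + d))) ∧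
        (∀ y : Submodule.span 𝕜 (x '' Set.Iio d),
          (∑' k : ℕ, (f k : 𝕜) • B ^ (k + 1)) (S y) = (y : X)) ∧
        (∀ y : Submodule.span 𝕜 (x '' Set.Iio d), ‖S y‖ ≤ F d * ‖(y : X)‖) ∧
        (∀ y : Submodule.span 𝕜 (x '' Set.Iio d), (y : X) ≠ 0 →
          ∀ q : ℕ, IsGreatest {n : ℕ | xs n (y : X) ≠ 0} q →
            IsGreatest {n : ℕ | xs n (S y) ≠ 0} (p + q + 1)) := by
  intro d hd
  have hw (n : ℕ) : ‖(w n : 𝕜)‖ = w n := RCLike.norm_of_nonneg (hw_pos n).le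
  have hf : Summable fun k => ‖f k‖ := by simpa using (lp.memℓp f).summable
  obtain ⟨S, hS_mem, hTS, hS_norm, hS_supp⟩ :=
    exists_local_right_inverse_general x xs C (fun n => (hx n).le) hxs hbi (fun n => (w n : 𝕜))
      (fun n => RCLike.ofReal_ne_zero.2 (hw_pos n).ne') (by simpa only [hw] using hw_anti.antitone)
      (by simpa only [hw]) (by simpa only [hw]) B hB f hf p hp hp' d hd
  exact ⟨S, hS_mem, hTS, by simpa only [hF, localInverseBound, hw] using hS_norm,
    fun y _ => hS_supp y⟩
end

section
/- Let 0 ≠ λ = (λₖ) ∈ ℓ¹. Then there exists a map S_λ : X_∞ → X with S_λ(X_∞) ⊆ X_∞ such that for all k ∈ ℕ and all y ∈ X_∞: (A2) T_λᵏ(S_λᵏ(y)) = y; and (B2) if y ≠ 0 then ‖S_λᵏ(y)‖ ≤ [F_λ(d_k^y)]^k · ‖y‖, where d_k^y := (k−1)·𝔭_λ + 𝔮_y. -/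
open Filter Topology
open scoped ENNReal

/-!
With `p + 1` the least degree occurring in `T = ∑ⱼ fⱼ B^(j+1)`, we have `T = B^(p+1) g(B)` for a
power series `g` with `g(0) = f p ≠ 0`. Every vector of the span of the `x n` is killed by a power
of `B`, so `g⁻¹(B)` makes sense there and inverts `g(B)`, while `B^(p+1)` sends
`x (n + p + 1)` to `w n ⋯ w (n + p) • x n`. This gives a preimage of each `x n` under `T`, and
`S` is the linear extension.

If `|f (p + i)| ≤ M` for `i < d`, the coefficients of `g⁻¹` below degree `d` grow at most like
`(1 + M / |f p|)^n`, and inverting the weights costs at most `w (p + d)^(-(p + 1))`; summing over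
`n < d` bounds `S` on the span of `x 0, …, x (d - 1)` by `F d`. Since `S` raises the support by
`p + 1`, the first `k - 1` iterates of `y` all stay in the span belonging to
`d = (k - 1)(p + 1) + (q + 1)`, so the single constant `F d` bounds each of the `k` steps.
-/

section FunctionalCalculus

open PowerSeries

theorem aeval_smul_eq_of_X_pow_dvd_sub {R A M : Type*} [CommRing R] [Ring A] [Algebra R A]
    [AddCommGroup M] [Module A M] {b : A} {z : M} {N : ℕ} {P Q : Polynomial R}
    (hPQ : Polynomial.X ^ N ∣ P - Q) (hz : b ^ N • z = 0) :
    Polynomial.aeval b P • z = Polynomial.aeval b Q • z := by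
  obtain ⟨D, hD⟩ := hPQ
  rw [← sub_eq_zero, ← sub_smul, ← map_sub, hD, mul_comm, map_mul, Polynomial.aeval_X_pow,
    mul_smul, hz, smul_zero]

theorem X_pow_dvd_trunc_mul_trunc_inv_sub_one {K : Type*} [Field K] {g : K⟦X⟧}
    (hg : constantCoeff g ≠ 0) (N : ℕ) :
    Polynomial.X ^ N ∣ trunc N g * trunc N g⁻¹ - 1 := by
  refine Polynomial.X_pow_dvd_iff.2 fun i hi => ?_
  rw [Polynomial.coeff_sub, ← Polynomial.coeff_coe, Polynomial.coe_mul,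
    ← coeff_mul_eq_coeff_trunc_mul_trunc g g⁻¹ hi, PowerSeries.mul_inv_cancel g hg,
    ← Polynomial.coeff_coe, Polynomial.coe_one, sub_self]

theorem aeval_trunc_smul_aeval_trunc_inv_smul {K A M : Type*} [Field K] [Ring A] [Algebra K A]
    [AddCommGroup M] [Module A M] {g : K⟦X⟧} (hg : constantCoeff g ≠ 0) {b : A} {z : M} {N : ℕ}
    (hz : b ^ N • z = 0) :
    Polynomial.aeval b (trunc N g) • Polynomial.aeval b (trunc N g⁻¹) • z = z := by
  rw [← mul_smul, ← map_mul,
    aeval_smul_eq_of_X_pow_dvd_sub (X_pow_dvd_trunc_mul_trunc_inv_sub_one hg N) hz, map_one,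
    one_smul]

section

variable {R M : Type*} [CommRing R] [AddCommGroup M] [Module R M] [TopologicalSpace M]
  [IsTopologicalAddGroup M] [ContinuousConstSMul R M]

theorem aeval_trunc_apply (B : M →L[R] M) (φ : R⟦X⟧) (N : ℕ) (z : M) :
    Polynomial.aeval B (trunc N φ) z = ∑ i ∈ Finset.range N, coeff i φ • (B ^ i) z := by
  rw [Polynomial.aeval_def, eval₂_trunc_eq_sum_range, sum_apply]
  simp only [← Algebra.smul_def, smul_apply]

theorem pow_apply_aeval_apply (B : M →L[R] M) (m : ℕ) (P : Polynomial R) (z : M) :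
    (B ^ m) (Polynomial.aeval B P z) = Polynomial.aeval B P ((B ^ m) z) := by
  have h : Commute (B ^ m) (Polynomial.aeval B P) := by
    rw [← Polynomial.aeval_X_pow (R := R) B]
    exact (Commute.all _ P).map (Polynomial.aeval B)
  exact congr($h.eq z)

end

variable {𝕜 X : Type*} [NontriviallyNormedField 𝕜] [NormedAddCommGroup X] [NormedSpace 𝕜 X]
  {B : X →L[𝕜] X}

theorem norm_pow_apply_le_norm (hB : ‖B‖ ≤ 1) (i : ℕ) (z : X) : ‖(B ^ i) z‖ ≤ ‖z‖ := by
  induction i with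
  | zero => simp
  | succ i ih =>
    rw [pow_succ', mul_apply_eq_comp]
    exact (B.le_of_opNorm_le hB _).trans (by rwa [one_mul])

theorem norm_aeval_trunc_apply_le (hB : ‖B‖ ≤ 1) (φ : 𝕜⟦X⟧) (N : ℕ) (z : X) :
    ‖Polynomial.aeval B (trunc N φ) z‖ ≤ (∑ i ∈ Finset.range N, ‖coeff i φ‖) * ‖z‖ := by
  rw [aeval_trunc_apply, Finset.sum_mul]
  refine norm_sum_le_of_le _ fun i _ => ?_
  rw [norm_smul]
  gcongr
  exact norm_pow_apply_le_norm hB i z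

theorem summable_smul_pow_succ_s10 [CompleteSpace X] {a : ℕ → 𝕜} (ha : Summable fun j => ‖a j‖)
    (hB : ‖B‖ ≤ 1) : Summable fun j => a j • B ^ (j + 1) := by
  refine Summable.of_norm_bounded ha fun j => ?_
  rw [norm_smul]
  refine mul_le_of_le_one_right (norm_nonneg _) ?_
  exact (norm_pow_le' B j.succ_pos).trans (pow_le_one₀ (norm_nonneg _) hB)

theorem tsum_smul_pow_succ_apply {a : ℕ → 𝕜} (hs : Summable fun j => a j • B ^ (j + 1)) {p N : ℕ}
    (ha : ∀ j < p, a j = 0) {z : X} (hz : (B ^ (N + (p + 1))) z = 0) :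
    (∑' j, a j • B ^ (j + 1)) z =
      (B ^ (p + 1)) (Polynomial.aeval B (trunc N (mk fun i => a (p + i))) z) := by
  have hvanish : ∀ j ∉ Finset.range (p + N), a j • (B ^ (j + 1)) z = 0 := by
    intro j hj
    obtain ⟨i, rfl⟩ := Nat.exists_eq_add_of_le (not_lt.1 (Finset.mem_range.not.1 hj))
    rw [show p + N + i + 1 = i + (N + (p + 1)) by ring, pow_add, mul_apply_eq_comp,
      hz, map_zero, smul_zero]
  have hlow : ∑ j ∈ Finset.range p, a j • (B ^ (j + 1)) z = 0 :=
    Finset.sum_eq_zero fun j hj => by rw [ha j (Finset.mem_range.1 hj), zero_smul]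
  calc (∑' j, a j • B ^ (j + 1)) z = ∑' j, a j • (B ^ (j + 1)) z :=
        (ContinuousLinearMap.apply 𝕜 X z).map_tsum hs
    _ = ∑ i ∈ Finset.range N, a (p + i) • (B ^ (p + i + 1)) z := by
        rw [tsum_eq_sum hvanish, Finset.sum_range_add, hlow, zero_add]
    _ = _ := by
        rw [aeval_trunc_apply, map_sum]
        refine Finset.sum_congr rfl fun i _ => ?_
        rw [map_smul, coeff_mk, ← mul_apply_eq_comp, ← pow_add, add_right_comm]

theorem tsum_smul_pow_succ_apply_aeval_trunc_inv {a : ℕ → 𝕜}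
    (hs : Summable fun j => a j • B ^ (j + 1)) {p N : ℕ} (hp : a p ≠ 0) (ha : ∀ j < p, a j = 0)
    {u z : X} (hu : (B ^ (p + 1)) u = z) (hz : (B ^ N) z = 0) :
    (∑' j, a j • B ^ (j + 1)) (Polynomial.aeval B (trunc N (mk fun i => a (p + i))⁻¹) u) = z := by
  set g : 𝕜⟦X⟧ := mk fun i => a (p + i)
  have hg : constantCoeff g ≠ 0 := by simpa [g] using hp
  have hu' : (B ^ (N + (p + 1))) u = 0 := by
    rw [pow_add, mul_apply_eq_comp, hu, hz]
  rw [tsum_smul_pow_succ_apply hs ha (N := N) (by rw [pow_apply_aeval_apply, hu', map_zero]),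
    pow_apply_aeval_apply, pow_apply_aeval_apply, hu]
  exact aeval_trunc_smul_aeval_trunc_inv_smul (b := B) hg hz

end FunctionalCalculus

section InverseSeries

open PowerSeries

variable {𝕜 : Type*} [NormedField 𝕜] {g : 𝕜⟦X⟧} {M : ℝ}

theorem norm_coeff_inv_succ_le (hg : constantCoeff g ≠ 0) {n : ℕ}
    (hM : ∀ i ≤ n + 1, ‖coeff i g‖ ≤ M) :
    ‖coeff (n + 1) g⁻¹‖ ≤
      M / ‖constantCoeff g‖ * ∑ j ∈ Finset.range (n + 1), ‖coeff j g⁻¹‖ := by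
  have hcoeff : constantCoeff g * coeff (n + 1) g⁻¹ =
      -∑ j ∈ Finset.range (n + 1), coeff (n + 1 - j) g * coeff j g⁻¹ := by
    have h := congr(coeff (n + 1) $(PowerSeries.inv_mul_cancel g hg))
    rw [coeff_mul, Finset.Nat.sum_antidiagonal_eq_sum_range_succ
      (fun i j => coeff i g⁻¹ * coeff j g), Finset.sum_range_succ, coeff_one,
      if_neg n.succ_ne_zero, Nat.sub_self, coeff_zero_eq_constantCoeff_apply] at h
    rw [mul_comm, eq_neg_iff_add_eq_zero, add_comm, ← h]
    simp only [mul_comm]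
  rw [div_mul_eq_mul_div, le_div_iff₀' (norm_pos_iff.2 hg), ← norm_mul, hcoeff, norm_neg,
    Finset.mul_sum]
  refine norm_sum_le_of_le _ fun j _ => ?_
  rw [norm_mul]
  gcongr
  exact hM _ (Nat.sub_le _ _)

theorem sum_norm_coeff_inv_le (hg : constantCoeff g ≠ 0) (n : ℕ)
    (hM : ∀ i ≤ n, ‖coeff i g‖ ≤ M) :
    ∑ i ∈ Finset.range (n + 1), ‖coeff i g⁻¹‖ ≤
      ‖constantCoeff g‖⁻¹ * (1 + M / ‖constantCoeff g‖) ^ n := by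
  have hM₀ : 0 ≤ M := (norm_nonneg _).trans (hM 0 n.zero_le)
  induction n with
  | zero => simp
  | succ n ih =>
    rw [Finset.sum_range_succ]
    calc _ ≤ _ := add_le_add_right (norm_coeff_inv_succ_le hg hM) _
      _ = (1 + M / ‖constantCoeff g‖) * ∑ j ∈ Finset.range (n + 1), ‖coeff j g⁻¹‖ := by ring
      _ ≤ (1 + M / ‖constantCoeff g‖) *
          (‖constantCoeff g‖⁻¹ * (1 + M / ‖constantCoeff g‖) ^ n) := by
        gcongr
        exact ih fun i hi => hM i (hi.trans n.le_succ)
      _ = _ := by ring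

end InverseSeries

theorem sum_range_one_add_pow_le {r : ℝ} (hr : 1 ≤ r) (d : ℕ) :
    ∑ n ∈ Finset.range d, (1 + r) ^ n ≤ r ^ (d - 1) * (d + 1).factorial := by
  have hterm : ∀ n ∈ Finset.range d, (1 + r) ^ n ≤ r ^ (d - 1) * 2 ^ n := by
    intro n hn
    calc (1 + r) ^ n ≤ (r * 2) ^ n := by gcongr; linarith
      _ ≤ r ^ (d - 1) * 2 ^ n := by
        rw [mul_pow]
        gcongr
        exact Nat.le_sub_one_of_lt (Finset.mem_range.1 hn)
  have hfact : 2 ^ d ≤ (d + 1).factorial := by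
    simpa [add_comm] using Nat.factorial_mul_pow_le_factorial (m := 1) (n := d)
  calc ∑ n ∈ Finset.range d, (1 + r) ^ n ≤ r ^ (d - 1) * ∑ n ∈ Finset.range d, 2 ^ n := by
        rw [Finset.mul_sum]
        exact Finset.sum_le_sum hterm
    _ ≤ r ^ (d - 1) * (d + 1).factorial := by
        gcongr
        exact_mod_cast (Nat.geomSum_lt le_rfl fun _ => Finset.mem_range.1).le.trans hfact

section BiorthogonalSequence

/-- The span of `x 0, …, x (d - 1)`. These subspaces exhaust the span of the sequence and play the
role of "support below `d`". -/
def initialSpan (R : Type*) {M : Type*} [Semiring R] [AddCommMonoid M] [Module R M]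
    (x : ℕ → M) (d : ℕ) : Submodule R M := Submodule.span R (x '' Set.Iio d)

variable {R M : Type*} [Semiring R] [AddCommMonoid M] [Module R M] {x : ℕ → M}

theorem mem_initialSpan {n d : ℕ} (h : n < d) : x n ∈ initialSpan R x d :=
  Submodule.subset_span (Set.mem_image_of_mem x h)

theorem initialSpan_mono : Monotone (initialSpan R x) := fun _ _ h =>
  Submodule.span_mono (Set.image_mono (Set.Iio_subset_Iio h))

theorem initialSpan_le_span_range (d : ℕ) :
    initialSpan R x d ≤ Submodule.span R (Set.range x) :=
  Submodule.span_mono (Set.image_subset_range x _)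

theorem exists_mem_initialSpan {y : M} (hy : y ∈ Submodule.span R (Set.range x)) :
    ∃ d, y ∈ initialSpan R x d := by
  have hle : Submodule.span R (Set.range x) ≤ ⨆ d, initialSpan R x d := by
    rw [Submodule.span_le]
    rintro _ ⟨n, rfl⟩
    exact Submodule.mem_iSup_of_mem (n + 1) (mem_initialSpan n.lt_succ_self)
  exact (Submodule.mem_iSup_of_directed _ initialSpan_mono.directed_le).1 (hle hy)

variable {F : Type*} [FunLike F M R] [LinearMapClass F R M R] {xs : ℕ → F}

theorem sum_apply_smul_eq_of_mem_initialSpan (hbi : ∀ m n, xs m (x n) = if m = n then 1 else 0)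
    {d : ℕ} {y : M} (hy : y ∈ initialSpan R x d) :
    ∑ n ∈ Finset.range d, xs n y • x n = y := by
  induction hy using Submodule.span_induction with
  | mem _ h =>
    obtain ⟨n, hn, rfl⟩ := h
    simp [hbi, Set.mem_Iio.1 hn]
  | zero => simp
  | add y z _ _ hy hz => simp only [map_add, add_smul, Finset.sum_add_distrib, hy, hz]
  | smul c y _ hy => simp only [map_smul, smul_assoc, ← Finset.smul_sum, hy]

theorem mem_initialSpan_of_apply_eq_zero (hbi : ∀ m n, xs m (x n) = if m = n then 1 else 0)
    {d : ℕ} {y : M} (hy : y ∈ Submodule.span R (Set.range x)) (h : ∀ n, d ≤ n → xs n y = 0) :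
    y ∈ initialSpan R x d := by
  obtain ⟨N, hN⟩ := exists_mem_initialSpan hy
  rw [← sum_apply_smul_eq_of_mem_initialSpan hbi hN]
  refine Submodule.sum_mem _ fun n _ => ?_
  rcases lt_or_ge n d with hn | hn
  · exact Submodule.smul_mem _ _ (mem_initialSpan hn)
  · simp [h n hn]

end BiorthogonalSequence

section BiorthogonalExtension

variable {R M F : Type*} [CommRing R] [AddCommGroup M] [Module R M]
  [FunLike F M R] [LinearMapClass F R M R] {x : ℕ → M} {xs : ℕ → F}

theorem linearIndependent_of_biorthogonal (hbi : ∀ m n, xs m (x n) = if m = n then 1 else 0) :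
    LinearIndependent R x :=
  LinearIndependent.of_pairwise_dual_eq_zero_one x (fun n => (xs n : M →ₗ[R] R))
    (fun m n hmn => by simp [hbi, hmn]) (fun n => by simp [hbi])

theorem exists_linearMap_span_apply_eq_sum
    (hbi : ∀ m n, xs m (x n) = if m = n then 1 else 0) {v : ℕ → M}
    (hv : ∀ n, v n ∈ Submodule.span R (Set.range x)) :
    ∃ S : Submodule.span R (Set.range x) →ₗ[R] Submodule.span R (Set.range x),
      ∀ (d : ℕ) (y : Submodule.span R (Set.range x)), (y : M) ∈ initialSpan R x d →
        (S y : M) = ∑ n ∈ Finset.range d, xs n y • v n := by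
  let e := Module.Basis.span (linearIndependent_of_biorthogonal hbi)
  have he (n : ℕ) : (e n : M) = x n := by simp [e, Module.Basis.span_apply]
  refine ⟨e.constr R fun n => ⟨v n, hv n⟩, fun d y hy => ?_⟩
  have hsum : y = ∑ n ∈ Finset.range d, xs n y • e n := by
    ext
    simp [he, sum_apply_smul_eq_of_mem_initialSpan hbi hy]
  conv_lhs => rw [hsum]
  simp [Module.Basis.constr_basis]

end BiorthogonalExtension

section WeightedBackwardShift

/-- `B` is the backward shift along the sequence `x` with weights `w`. Only its values on the
sequence are prescribed. -/
structure IsWeightedBackwardShift {R M : Type*} [Semiring R] [AddCommMonoid M] [Module R M]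
    [TopologicalSpace M] (B : M →L[R] M) (w : ℕ → R) (x : ℕ → M) : Prop where
  apply_zero : B (x 0) = 0
  apply_succ : ∀ n, B (x (n + 1)) = w n • x n

namespace IsWeightedBackwardShift

variable {R M : Type*} [CommSemiring R] [AddCommMonoid M] [Module R M] [TopologicalSpace M]
  {B : M →L[R] M} {w : ℕ → R} {x : ℕ → M}

theorem of_tsum {xs : ℕ → M → R} (hbi : ∀ m n, xs m (x n) = if m = n then 1 else 0)
    (hB : ∀ z, B z = ∑' n, (w n * xs (n + 1) z) • x n) : IsWeightedBackwardShift B w x where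
  apply_zero := by simp [hB, hbi]
  apply_succ n := by
    rw [hB, tsum_eq_single n fun m hm => by simp [hbi, hm]]
    simp [hbi]

theorem pow_apply_add (hB : IsWeightedBackwardShift B w x) (k n : ℕ) :
    (B ^ k) (x (n + k)) = (∏ i ∈ Finset.range k, w (n + i)) • x n := by
  induction k with
  | zero => simp
  | succ k ih =>
    rw [pow_succ, mul_apply_eq_comp, ← add_assoc, hB.apply_succ, map_smul, ih, smul_smul,
      Finset.prod_range_succ, mul_comm]

theorem pow_apply_eq_zero (hB : IsWeightedBackwardShift B w x) {n k : ℕ} (h : n < k) :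
    (B ^ k) (x n) = 0 := by
  obtain ⟨j, rfl⟩ := Nat.exists_eq_add_of_lt h
  have hn := hB.pow_apply_add n 0
  rw [zero_add] at hn
  rw [show n + j + 1 = j + 1 + n by ring, pow_add, mul_apply_eq_comp, hn, map_smul, pow_succ,
    mul_apply_eq_comp, hB.apply_zero, map_zero, smul_zero]

theorem apply_mem_initialSpan (hB : IsWeightedBackwardShift B w x) {d : ℕ} {z : M}
    (hz : z ∈ initialSpan R x d) : B z ∈ initialSpan R x d := by
  suffices h : initialSpan R x d ≤ (initialSpan R x d).comap (B : M →ₗ[R] M) from h hz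
  refine Submodule.span_le.2 ?_
  rintro _ ⟨n | n, hn, rfl⟩
  · simp [hB.apply_zero]
  · simpa [hB.apply_succ] using
      Submodule.smul_mem _ (w n) (mem_initialSpan (n.lt_succ_self.trans hn))

theorem pow_apply_mem_initialSpan (hB : IsWeightedBackwardShift B w x) {d : ℕ} {z : M}
    (hz : z ∈ initialSpan R x d) (k : ℕ) : (B ^ k) z ∈ initialSpan R x d := by
  induction k with
  | zero => exact hz
  | succ k ih => exact pow_succ' B k ▸ hB.apply_mem_initialSpan ih

end IsWeightedBackwardShift

variable {𝕜 X : Type*} [NontriviallyNormedField 𝕜] [NormedAddCommGroup X] [NormedSpace 𝕜 X]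
  {x : ℕ → X} {w : ℕ → 𝕜} {B : X →L[𝕜] X}

theorem IsWeightedBackwardShift.norm_weight_le_one (hB : IsWeightedBackwardShift B w x)
    (hx : ∀ n, ‖x n‖ = 1) (hB₁ : ‖B‖ ≤ 1) (n : ℕ) : ‖w n‖ ≤ 1 := by
  simpa [hB.apply_succ, norm_smul, hx] using B.le_of_opNorm_le hB₁ (x (n + 1))

theorem norm_le_one_of_forall_apply_eq_tsum {xs : ℕ → X →L[𝕜] 𝕜} {C : ℝ}
    (hx : ∀ n, ‖x n‖ ≤ 1) (hxs : ∀ n, ‖xs n‖ ≤ C) (hw : Summable fun n => ‖w n‖)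
    (hwC : ∑' n, ‖w n‖ ≤ C⁻¹)
    (hB : ∀ z, B z = ∑' n, (w n * xs (n + 1) z) • x n) : ‖B‖ ≤ 1 := by
  have hC : 0 ≤ C := (norm_nonneg _).trans (hxs 0)
  refine B.opNorm_le_bound zero_le_one fun z => ?_
  rw [hB]
  refine (tsum_of_norm_bounded (hw.hasSum.mul_right (C * ‖z‖)) fun n => ?_).trans ?_
  · calc ‖(w n * xs (n + 1) z) • x n‖ ≤ ‖w n * xs (n + 1) z‖ := by
          rw [norm_smul]
          exact mul_le_of_le_one_right (norm_nonneg _) (hx n)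
      _ ≤ ‖w n‖ * (C * ‖z‖) := by
          rw [norm_mul]
          gcongr
          exact (xs (n + 1)).le_of_opNorm_le (hxs _) z
  · calc (∑' n, ‖w n‖) * (C * ‖z‖) ≤ C⁻¹ * (C * ‖z‖) := by gcongr
      _ = C⁻¹ * C * ‖z‖ := by ring
      _ ≤ 1 * ‖z‖ := by gcongr; exact inv_mul_le_one

end WeightedBackwardShift

section RightInverse

open PowerSeries

variable {𝕜 X : Type*} [NontriviallyNormedField 𝕜] [NormedAddCommGroup X] [NormedSpace 𝕜 X]

/-- The preimage of `x n` under `∑ⱼ aⱼ B^(j+1) = B^(p+1) g(B)`, where `g = ∑ᵢ a_(p+i) Xⁱ`: the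
multiple of `x (n + p + 1)` that `B^(p+1)` maps to `x n`, corrected by `g⁻¹(B)`. The series `g⁻¹` is
cut off at degree `n` because `B^(n+1)` kills `x n`. -/
noncomputable def rightInverseVec (B : X →L[𝕜] X) (w : ℕ → 𝕜) (x : ℕ → X) (a : ℕ → 𝕜)
    (p n : ℕ) : X :=
  Polynomial.aeval B (trunc (n + 1) (mk fun i => a (p + i))⁻¹)
    ((∏ i ∈ Finset.range (p + 1), w (n + i))⁻¹ • x (n + (p + 1)))

/-- The constant `F_λ(d)` of the paper, for `λₖ₊₁ = a k`, `𝔭_λ = p + 1` and weights `w`. -/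
noncomputable def rightInverseBound (C : ℝ) (w a : ℕ → 𝕜) (p d : ℕ) : ℝ :=
  C * (d + 1).factorial * (⨆ i : Fin d, ‖a (p + i)‖) ^ (d - 1) /
    (‖a p‖ ^ d * ‖w (p + d)‖ ^ (d * (p + 1)))

theorem rightInverseBound_nonneg {C : ℝ} (hC : 0 ≤ C) (w a : ℕ → 𝕜) (p d : ℕ) :
    0 ≤ rightInverseBound C w a p d := by
  have : 0 ≤ ⨆ i : Fin d, ‖a (p + i)‖ := Real.iSup_nonneg fun _ => norm_nonneg _
  unfold rightInverseBound
  positivity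

variable {B : X →L[𝕜] X} {w : ℕ → 𝕜} {x : ℕ → X} {a : ℕ → 𝕜} {p : ℕ}

theorem tsum_apply_rightInverseVec (hB : IsWeightedBackwardShift B w x) (hw : ∀ n, w n ≠ 0)
    (hs : Summable fun j => a j • B ^ (j + 1)) (hp : a p ≠ 0) (ha : ∀ j < p, a j = 0) (n : ℕ) :
    (∑' j, a j • B ^ (j + 1)) (rightInverseVec B w x a p n) = x n := by
  refine tsum_smul_pow_succ_apply_aeval_trunc_inv hs hp ha ?_
    (hB.pow_apply_eq_zero n.lt_succ_self)
  rw [map_smul, hB.pow_apply_add,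
    inv_smul_smul₀ (Finset.prod_ne_zero_iff.2 fun i _ => hw (n + i))]

theorem rightInverseVec_mem_initialSpan (hB : IsWeightedBackwardShift B w x) (a : ℕ → 𝕜)
    (p n : ℕ) : rightInverseVec B w x a p n ∈ initialSpan 𝕜 x (n + (p + 1) + 1) := by
  rw [rightInverseVec, aeval_trunc_apply]
  exact Submodule.sum_mem _ fun i _ => Submodule.smul_mem _ _ <| hB.pow_apply_mem_initialSpan
    (Submodule.smul_mem _ _ (mem_initialSpan (Nat.lt_succ_self _))) i

theorem norm_rightInverseVec_le (hB : ‖B‖ ≤ 1) (hx : ∀ n, ‖x n‖ = 1) (hp : a p ≠ 0) {d n : ℕ}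
    (hn : n < d) (hw : ∀ n, w n ≠ 0) (hw_anti : Antitone fun n => ‖w n‖) {M : ℝ}
    (hM : ∀ i < d, ‖a (p + i)‖ ≤ M) :
    ‖rightInverseVec B w x a p n‖ ≤
      ‖a p‖⁻¹ * (1 + M / ‖a p‖) ^ n * (‖w (p + d)‖ ^ (p + 1))⁻¹ := by
  have hM₀ : 0 ≤ M := (norm_nonneg _).trans (hM n hn)
  have hcoeff := sum_norm_coeff_inv_le (g := mk fun i => a (p + i)) (by simpa using hp) n
    (M := M) fun i hi => by simpa using hM i (hi.trans_lt hn)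
  have hprod : ‖w (p + d)‖ ^ (p + 1) ≤ ∏ i ∈ Finset.range (p + 1), ‖w (n + i)‖ := by
    calc ‖w (p + d)‖ ^ (p + 1) = ∏ _i ∈ Finset.range (p + 1), ‖w (p + d)‖ := by
          rw [Finset.prod_const, Finset.card_range]
      _ ≤ ∏ i ∈ Finset.range (p + 1), ‖w (n + i)‖ :=
          Finset.prod_le_prod (fun _ _ => norm_nonneg _) fun i hi =>
            hw_anti (by have := Finset.mem_range.1 hi; omega)
  have hpos := pow_pos (norm_pos_iff.2 (hw (p + d))) (p + 1)
  refine (norm_aeval_trunc_apply_le hB _ _ _).trans ?_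
  rw [norm_smul, hx, mul_one, norm_inv, norm_prod]
  gcongr
  simpa using hcoeff

theorem mul_sum_norm_rightInverseVec_le (hB : ‖B‖ ≤ 1) (hx : ∀ n, ‖x n‖ = 1) (hp : a p ≠ 0)
    (hw : ∀ n, w n ≠ 0) (hw₁ : ∀ n, ‖w n‖ ≤ 1) (hw_anti : Antitone fun n => ‖w n‖)
    {C : ℝ} (hC : 0 ≤ C) {d : ℕ} (hd : 0 < d) :
    C * ∑ n ∈ Finset.range d, ‖rightInverseVec B w x a p n‖ ≤ rightInverseBound C w a p d := by
  set M : ℝ := ⨆ i : Fin d, ‖a (p + i)‖ with hM_def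
  have hM : ∀ i < d, ‖a (p + i)‖ ≤ M := fun i hi =>
    le_ciSup (f := fun i : Fin d => ‖a (p + i)‖) (Set.finite_range _).bddAbove ⟨i, hi⟩
  have hap : 0 < ‖a p‖ := norm_pos_iff.2 hp
  have hratio : 1 ≤ M / ‖a p‖ := (one_le_div hap).2 (hM 0 hd)
  have hω : 0 < ‖w (p + d)‖ := norm_pos_iff.2 (hw _)
  calc C * ∑ n ∈ Finset.range d, ‖rightInverseVec B w x a p n‖
      ≤ C * ∑ n ∈ Finset.range d,
          ‖a p‖⁻¹ * (1 + M / ‖a p‖) ^ n * (‖w (p + d)‖ ^ (p + 1))⁻¹ := by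
        gcongr with n hn
        exact norm_rightInverseVec_le hB hx hp (Finset.mem_range.1 hn) hw hw_anti hM
    _ = C * (‖a p‖⁻¹ * (∑ n ∈ Finset.range d, (1 + M / ‖a p‖) ^ n) *
          (‖w (p + d)‖ ^ (p + 1))⁻¹) := by
        rw [← Finset.sum_mul, ← Finset.mul_sum]
    _ ≤ C * (‖a p‖⁻¹ * ((M / ‖a p‖) ^ (d - 1) * (d + 1).factorial) *
          (‖w (p + d)‖ ^ (d * (p + 1)))⁻¹) := by
        gcongr C * (‖a p‖⁻¹ * ?_ * ?_)
        · exact sum_range_one_add_pow_le hratio d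
        · exact inv_anti₀ (by positivity)
            (pow_le_pow_of_le_one hω.le (hw₁ _) (Nat.le_mul_of_pos_left _ hd))
    _ = rightInverseBound C w a p d := by
        rw [rightInverseBound, ← hM_def, ← mul_pow_sub_one hd.ne' ‖a p‖, div_pow]
        field_simp

end RightInverse

section Iterates

theorem pow_apply_iterate_eq {R M : Type*} [Semiring R] [AddCommMonoid M] [Module R M]
    [TopologicalSpace M] {V : Submodule R M} {T : M →L[R] M} {S : V → V}
    (h : ∀ y, T (S y) = y) (k : ℕ) (y : V) : (T ^ k) (S^[k] y) = y := by
  induction k with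
  | zero => rfl
  | succ k ih => rw [Function.iterate_succ_apply', pow_succ, mul_apply_eq_comp, h, ih]

theorem iterate_mem_of_mapsTo_add {Y : Type*} {S : Y → Y} {V : ℕ → Set Y} {m : ℕ}
    (hS : ∀ d, Set.MapsTo S (V d) (V (d + m))) {e : ℕ} {y : Y} (hy : y ∈ V e) (k : ℕ) :
    S^[k] y ∈ V (k * m + e) := by
  induction k with
  | zero => simpa using hy
  | succ k ih =>
    rw [Function.iterate_succ_apply', Nat.succ_mul, add_right_comm]
    exact hS _ ih

theorem norm_iterate_le_pow_mul {Y : Type*} [Norm Y] {S : Y → Y} {V : ℕ → Set Y} (hV : Monotone V)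
    {m : ℕ} (hS : ∀ d, Set.MapsTo S (V d) (V (d + m))) {c : ℝ} (hc : 0 ≤ c) {d e k : ℕ}
    (hSd : ∀ y ∈ V d, ‖S y‖ ≤ c * ‖y‖) (hde : (k - 1) * m + e ≤ d) {y : Y} (hy : y ∈ V e) :
    ‖S^[k] y‖ ≤ c ^ k * ‖y‖ := by
  induction k with
  | zero => simp
  | succ k ih =>
    have hmem : S^[k] y ∈ V d := hV hde (iterate_mem_of_mapsTo_add hS hy k)
    have hk : (k - 1) * m + e ≤ d := le_trans (by gcongr; omega) hde
    calc ‖S^[k + 1] y‖ = ‖S (S^[k] y)‖ := by rw [Function.iterate_succ_apply']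
      _ ≤ c * ‖S^[k] y‖ := hSd _ hmem
      _ ≤ c * (c ^ k * ‖y‖) := by gcongr; exact ih hk
      _ = c ^ (k + 1) * ‖y‖ := by ring

end Iterates

section RightInverseOnSpan

variable {𝕜 X : Type*} [NontriviallyNormedField 𝕜] [NormedAddCommGroup X] [NormedSpace 𝕜 X]
  {x : ℕ → X} {xs : ℕ → X →L[𝕜] 𝕜}

theorem norm_sum_apply_smul_le {C : ℝ} (hxs : ∀ n, ‖xs n‖ ≤ C) (v : ℕ → X) (d : ℕ) (y : X) :
    ‖∑ n ∈ Finset.range d, xs n y • v n‖ ≤ (C * ∑ n ∈ Finset.range d, ‖v n‖) * ‖y‖ := by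
  rw [mul_right_comm, Finset.mul_sum]
  refine norm_sum_le_of_le _ fun n _ => ?_
  rw [norm_smul]
  gcongr
  exact (xs n).le_of_opNorm_le (hxs n) y

variable {C : ℝ} {w : ℕ → 𝕜} {B : X →L[𝕜] X} {a : ℕ → 𝕜} {p : ℕ}

theorem exists_linearMap_rightInverse_tsum (hx : ∀ n, ‖x n‖ = 1) (hxs : ∀ n, ‖xs n‖ ≤ C)
    (hbi : ∀ m n, xs m (x n) = if m = n then 1 else 0) (hw : ∀ n, w n ≠ 0)
    (hw_anti : Antitone fun n => ‖w n‖) (hB : IsWeightedBackwardShift B w x) (hB₁ : ‖B‖ ≤ 1)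
    (hs : Summable fun j => a j • B ^ (j + 1)) (hp : a p ≠ 0) (hp' : ∀ j < p, a j = 0) :
    ∃ S : Submodule.span 𝕜 (Set.range x) →ₗ[𝕜] Submodule.span 𝕜 (Set.range x),
      (∀ y, (∑' j, a j • B ^ (j + 1)) (S y : X) = y) ∧
      (∀ d (y : Submodule.span 𝕜 (Set.range x)), (y : X) ∈ initialSpan 𝕜 x d →
        (S y : X) ∈ initialSpan 𝕜 x (d + (p + 1))) ∧
      ∀ d (y : Submodule.span 𝕜 (Set.range x)), 0 < d → (y : X) ∈ initialSpan 𝕜 x d →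
        ‖S y‖ ≤ rightInverseBound C w a p d * ‖y‖ := by
  have hv := rightInverseVec_mem_initialSpan hB a p
  obtain ⟨S, hS⟩ := exists_linearMap_span_apply_eq_sum hbi
    fun n => initialSpan_le_span_range _ (hv n)
  refine ⟨S, fun y => ?_, fun d y hy => ?_, fun d y hd hy => ?_⟩
  · obtain ⟨d, hd⟩ := exists_mem_initialSpan y.2
    simp only [hS d y hd, map_sum, map_smul, tsum_apply_rightInverseVec hB hw hs hp hp',
      sum_apply_smul_eq_of_mem_initialSpan hbi hd]
  · rw [hS d y hy]
    refine Submodule.sum_mem _ fun n hn => Submodule.smul_mem _ _ (initialSpan_mono ?_ (hv n))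
    have := Finset.mem_range.1 hn
    omega
  · rw [Submodule.coe_norm, hS d y hy]
    refine (norm_sum_apply_smul_le hxs _ d _).trans ?_
    exact mul_le_mul_of_nonneg_right (mul_sum_norm_rightInverseVec_le hB₁ hx hp hw
      (hB.norm_weight_le_one hx hB₁) hw_anti ((norm_nonneg _).trans (hxs 0)) hd) (norm_nonneg _)

theorem exists_right_inverse_on_span_general [CompleteSpace X] (hx : ∀ n, ‖x n‖ = 1)
    (hxs : ∀ n, ‖xs n‖ ≤ C) (hbi : ∀ m n, xs m (x n) = if m = n then 1 else 0)
    (hw : ∀ n, w n ≠ 0) (hw_anti : Antitone fun n => ‖w n‖)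
    (hB : IsWeightedBackwardShift B w x) (hB₁ : ‖B‖ ≤ 1)
    (ha : Summable fun j => ‖a j‖) (hp : a p ≠ 0) (hp' : ∀ j < p, a j = 0) :
    ∃ S : Submodule.span 𝕜 (Set.range x) →ₗ[𝕜] Submodule.span 𝕜 (Set.range x),
      ∀ (k : ℕ) (y : Submodule.span 𝕜 (Set.range x)),
        ((∑' j, a j • B ^ (j + 1)) ^ k) (S^[k] y) = (y : X) ∧
        ∀ q ∈ upperBounds {n | xs n (y : X) ≠ 0},
          ‖S^[k] y‖ ≤ rightInverseBound C w a p ((k - 1) * (p + 1) + (q + 1)) ^ k * ‖y‖ := by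
  obtain ⟨S, hTS, hSmem, hSnorm⟩ := exists_linearMap_rightInverse_tsum hx hxs hbi hw hw_anti hB hB₁
    (summable_smul_pow_succ_s10 ha hB₁) hp hp'
  refine ⟨S, fun k y => ⟨pow_apply_iterate_eq hTS k y, fun q hq => ?_⟩⟩
  have hC : 0 ≤ C := (norm_nonneg _).trans (hxs 0)
  have hy : (y : X) ∈ initialSpan 𝕜 x (q + 1) :=
    mem_initialSpan_of_apply_eq_zero hbi y.2 fun n hn =>
      of_not_not fun h => (Nat.lt_of_succ_le hn).not_ge (hq h)
  let V (d : ℕ) : Set (Submodule.span 𝕜 (Set.range x)) := {z | (z : X) ∈ initialSpan 𝕜 x d}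
  exact norm_iterate_le_pow_mul (V := V) (e := q + 1)
    (fun _ _ hde _ hz => initialSpan_mono hde hz) hSmem (rightInverseBound_nonneg hC w a p _)
    (fun z hz => hSnorm _ z (Nat.succ_pos _) hz) le_rfl hy

end RightInverseOnSpan

/-- (Indices are 0-based: `x n` is the paper's `x_{n+1}`, the coefficient
`f k` multiplies `B_w^{k+1}`, the paper's `𝔭_λ` is `p + 1`, and for `y ≠ 0` with largest
0-based support index `q` the paper's `𝔮_y` is `q + 1`; hence the paper's
`d_k^y = (k-1)·𝔭_λ + 𝔮_y` becomes `(k-1)·(p+1) + (q+1)`.  `X_∞` is the span of the `x n`.)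
For every nonzero `f ∈ ℓ¹` there is a map `S : X_∞ → X_∞` (so in particular
`S(X_∞) ⊆ X_∞`) such that for every `k ≥ 1` and every `y ∈ X_∞`:
(A2) `T_fᵏ (Sᵏ y) = y`; and (B2) if `y ≠ 0` then
`‖Sᵏ y‖ ≤ (F_f((k-1)(p+1) + q+1))ᵏ · ‖y‖`. -/
theorem exists_right_inverse_on_span
    {𝕜 : Type*} [RCLike 𝕜] {X : Type*} [NormedAddCommGroup X] [NormedSpace 𝕜 X]
    [CompleteSpace X]
    (x : ℕ → X) (xs : ℕ → X →L[𝕜] 𝕜) (C : ℝ)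
    (hx : ∀ n, ‖x n‖ = 1)
    (hxs : ∀ n, ‖xs n‖ ≤ C)
    (hbi : ∀ m n, xs m (x n) = if m = n then 1 else 0)
    (hdense : Dense (Submodule.span 𝕜 (Set.range x) : Set X))
    (hsep : ∀ z : X, (∀ n, xs n z = 0) → z = 0)
    (w : ℕ → ℝ)
    (hw_pos : ∀ n, 0 < w n)
    (hw_anti : StrictAnti w)
    (hw_lim : Tendsto w atTop (nhds 0))
    (hw_sum : Summable w)
    (hw_le : ∑' n, w n ≤ C⁻¹)
    (B : X →L[𝕜] X)
    (hB : ∀ z : X, B z = ∑' n : ℕ, ((w n : 𝕜) * xs (n + 1) z) • x n)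
    (f : lp (fun _ : ℕ => 𝕜) 1)
    (p : ℕ) (hp : f p ≠ 0) (hp' : ∀ k < p, f k = 0)
    (F : ℕ → ℝ)
    (hF : ∀ d : ℕ,
      F d = C * (Nat.factorial (d + 1) : ℝ) * (⨆ i : Fin d, ‖f (p + (i : ℕ))‖) ^ (d - 1) /
        (‖f p‖ ^ d * (w (p + d)) ^ (d * (p + 1)))) :
    ∃ S : (Submodule.span 𝕜 (Set.range x)) → (Submodule.span 𝕜 (Set.range x)),
      ∀ k : ℕ, 1 ≤ k → ∀ y : Submodule.span 𝕜 (Set.range x),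
        (((∑' j : ℕ, (f j : 𝕜) • B ^ (j + 1)) ^ k) ((S^[k] y : Submodule.span 𝕜 (Set.range x)) : X)
            = (y : X)) ∧
        ((y : X) ≠ 0 → ∀ q : ℕ, IsGreatest {n : ℕ | xs n (y : X) ≠ 0} q →
          ‖((S^[k] y : Submodule.span 𝕜 (Set.range x)) : X)‖ ≤
            (F ((k - 1) * (p + 1) + (q + 1))) ^ k * ‖(y : X)‖) := by
  have hw (n : ℕ) : ‖(w n : 𝕜)‖ = w n := RCLike.norm_of_nonneg (hw_pos n).le
  have hB₁ : ‖B‖ ≤ 1 :=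
    norm_le_one_of_forall_apply_eq_tsum (fun n => (hx n).le) hxs (by simpa only [hw] using hw_sum)
      (by simpa only [hw] using hw_le) hB
  have hf : Summable fun j => ‖f j‖ := by simpa using (lp.memℓp f).summable (by simp)
  obtain rfl : F = rightInverseBound C (fun n => (w n : 𝕜)) f p :=
    funext fun d => by rw [hF, rightInverseBound, hw]
  obtain ⟨S, hS⟩ := exists_right_inverse_on_span_general hx hxs hbi
    (fun n => RCLike.ofReal_ne_zero.2 (hw_pos n).ne') (by simpa only [hw] using hw_anti.antitone)
    (.of_tsum hbi hB) hB₁ hf hp hp'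
  exact ⟨S, fun k _ y => ⟨(hS k y).1, fun _ q hq => (hS k y).2 q hq.2⟩⟩
end

section
/- Every nonzero operator in the operator-norm closure of {T_λ : λ ∈ ℓ¹} ⊆ L(X) is supercyclic. That is, if U ∈ L(X), U ≠ 0, and there is a sequence (λ^m)ₘ ⊆ ℓ¹ with ‖T_{λ^m} − U‖ → 0, then there exists x ∈ X such that {c·Uᵏ(x) : c ∈ 𝕂, k ≥ 0} is dense in X. -/
open Filter Topology
open scoped ENNReal

/-!
`B` is a generalized backward shift: its kernel is a line, contained in the range of every power of
`B`, and the subspaces `ker Bⁿ` have dense union. The operator `U` commutes with `B` and kills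
`ker B`, since both properties hold for each `T_f` and pass to norm limits. Hence
`ker Bⁿ ⊆ ker Uⁿ`. If `U ≠ 0`, then `U` does not vanish on some `ker Bᵐ`; applying powers of `B` to
a nonzero value of `U` there shows that `U` hits the line `ker B`, and climbing the kernels of the
powers of `B` then shows that `U` hits every `ker Bⁿ`. So `U` has dense generalized kernel and dense
range, and such an operator is supercyclic by Baire category: if `Uⁿ u = 0`, then `u + ε v` is
close to `u` while `ε⁻¹ Uⁿ (u + ε v) = Uⁿ v` is arbitrary in a dense set.
-/

section IterateKer

theorem mem_iSup_ker_pow {R M : Type*} [Semiring R] [AddCommMonoid M] [Module R M]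
    {f : Module.End R M} {v : M} : v ∈ ⨆ n, LinearMap.ker (f ^ n) ↔ ∃ n, (f ^ n) v = 0 :=
  Submodule.mem_iSup_of_directed _ f.iterateKer.monotone.directed_le

theorem ker_pow_le_ker_pow_of_commute {R M : Type*} [Semiring R] [AddCommMonoid M] [Module R M]
    {f g : Module.End R M} (hfg : Commute f g) (hker : LinearMap.ker f ≤ LinearMap.ker g) (n : ℕ) :
    LinearMap.ker (f ^ n) ≤ LinearMap.ker (g ^ n) := by
  induction n with
  | zero => exact le_rfl
  | succ n ih =>
    intro v hv
    have hfv : (f ^ n) v ∈ LinearMap.ker f := by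
      rwa [LinearMap.mem_ker, ← Module.End.mul_apply, ← pow_succ']
    have hgv : g v ∈ LinearMap.ker (f ^ n) := by
      rw [LinearMap.mem_ker, ← Module.End.mul_apply, (hfg.pow_left n).eq, Module.End.mul_apply]
      exact hker hfv
    rw [LinearMap.mem_ker, pow_succ, Module.End.mul_apply]
    exact ih hgv

theorem ker_pow_le_range_of_ker_le_range_pow_mul {R M : Type*} [Ring R] [AddCommGroup M]
    [Module R M] {f g : Module.End R M}
    (h : ∀ n, LinearMap.ker f ≤ LinearMap.range (f ^ n * g)) (n : ℕ) :
    LinearMap.ker (f ^ n) ≤ LinearMap.range g := by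
  induction n with
  | zero => exact fun v hv => (show v = 0 from hv) ▸ zero_mem _
  | succ n ih =>
    intro v hv
    have hfv : (f ^ n) v ∈ LinearMap.ker f := by
      rwa [LinearMap.mem_ker, ← Module.End.mul_apply, ← pow_succ']
    obtain ⟨u, hu⟩ := h n hfv
    have hsub : v - g u ∈ LinearMap.ker (f ^ n) := by
      rw [LinearMap.mem_ker, map_sub, ← hu, Module.End.mul_apply, sub_self]
    exact (Submodule.sub_mem_iff_left _ (LinearMap.mem_range_self g u)).1 (ih hsub)

theorem exists_pow_apply_mem_ker_of_ne_zero {R M : Type*} [Semiring R] [AddCommMonoid M]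
    [Module R M] {f : Module.End R M} {m : ℕ} {v : M} (hv : (f ^ m) v = 0) (hv0 : v ≠ 0) :
    ∃ n, (f ^ n) v ∈ LinearMap.ker f ∧ (f ^ n) v ≠ 0 := by
  induction m with
  | zero => exact absurd hv hv0
  | succ m ih =>
    by_cases hm : (f ^ m) v = 0
    · exact ih hm
    · exact ⟨m, by rwa [LinearMap.mem_ker, ← Module.End.mul_apply, ← pow_succ'], hm⟩

variable {K V : Type*} [DivisionRing K] [AddCommGroup V] [Module K V]

theorem ker_le_range_pow_mul_of_commute {f g : Module.End K V} (hfg : Commute f g)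
    (hrank : Module.finrank K (LinearMap.ker f) = 1)
    (hrange : ∀ n, LinearMap.ker f ≤ LinearMap.range (f ^ n))
    {m : ℕ} {v : V} (hv : (f ^ m) v = 0) (hgv : g v ≠ 0) (n : ℕ) :
    LinearMap.ker f ≤ LinearMap.range (f ^ n * g) := by
  have hfgv : (f ^ m) (g v) = 0 := by
    rw [← Module.End.mul_apply, (hfg.pow_left m).eq, Module.End.mul_apply, hv, map_zero]
  obtain ⟨j, hj, hj0⟩ := exists_pow_apply_mem_ker_of_ne_zero hfgv hgv
  have hvn : v ∈ LinearMap.range (f ^ n) :=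
    ker_pow_le_range_of_ker_le_range_pow_mul (fun k => pow_add f k n ▸ hrange (k + n)) m hv
  obtain ⟨u, rfl⟩ := hvn
  have hmem : (f ^ j) (g ((f ^ n) u)) ∈ LinearMap.range (f ^ n * g) := by
    refine ⟨(f ^ j) u, ?_⟩
    have hcomm : f ^ n * g * f ^ j = f ^ j * (g * f ^ n) := by
      rw [← (hfg.pow_left n).eq, mul_assoc, ← (hfg.pow_left j).eq, ← mul_assoc, ← mul_assoc,
        (Commute.pow_pow_self f n j).eq]
    exact LinearMap.congr_fun hcomm u
  intro y hy
  obtain ⟨c, hc⟩ := (finrank_eq_one_iff_of_nonzero' (⟨_, hj⟩ : LinearMap.ker f)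
    (fun h => hj0 (congrArg Subtype.val h))).1 hrank ⟨y, hy⟩
  have hcy : c • (f ^ j) (g ((f ^ n) u)) = y := congrArg Subtype.val hc
  exact hcy ▸ Submodule.smul_mem _ c hmem

theorem ker_pow_le_range_of_commute {f g : Module.End K V} (hfg : Commute f g)
    (hrank : Module.finrank K (LinearMap.ker f) = 1)
    (hrange : ∀ n, LinearMap.ker f ≤ LinearMap.range (f ^ n))
    {m : ℕ} {v : V} (hv : (f ^ m) v = 0) (hgv : g v ≠ 0) (n : ℕ) :
    LinearMap.ker (f ^ n) ≤ LinearMap.range g :=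
  ker_pow_le_range_of_ker_le_range_pow_mul
    (ker_le_range_pow_mul_of_commute hfg hrank hrange hv hgv) n

end IterateKer

theorem exists_denseRange_of_forall_isOpen {ι Y Z : Type*} [TopologicalSpace Y] [BaireSpace Y]
    [Nonempty Y] [TopologicalSpace Z] [SecondCountableTopology Z] {f : ι → Y → Z}
    (hf : ∀ i, Continuous (f i))
    (h : ∀ O V, IsOpen O → O.Nonempty → IsOpen V → V.Nonempty → ∃ i, ∃ y ∈ O, f i y ∈ V) :
    ∃ y, DenseRange fun i => f i y := by
  have hbasis := TopologicalSpace.isBasis_countableBasis Z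
  have hopen : ∀ V ∈ TopologicalSpace.countableBasis Z, IsOpen (⋃ i, f i ⁻¹' V) := fun V hV =>
    isOpen_iUnion fun i => (hbasis.isOpen hV).preimage (hf i)
  have hdense : ∀ V ∈ TopologicalSpace.countableBasis Z, Dense (⋃ i, f i ⁻¹' V) := by
    refine fun V hV => dense_iff_inter_open.2 fun O hO hOne => ?_
    obtain ⟨i, y, hyO, hyV⟩ :=
      h O V hO hOne (hbasis.isOpen hV) (TopologicalSpace.nonempty_of_mem_countableBasis hV)
    exact ⟨y, hyO, Set.mem_iUnion.2 ⟨i, hyV⟩⟩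
  obtain ⟨y, hy⟩ :=
    (dense_biInter_of_isOpen hopen (TopologicalSpace.countable_countableBasis Z) hdense).nonempty
  refine ⟨y, hbasis.dense_iff.2 fun V hV _ => ?_⟩
  obtain ⟨i, hi⟩ := Set.mem_iUnion.1 (Set.mem_iInter₂.1 hy V hV)
  exact ⟨f i y, hi, i, rfl⟩

/-- An operator is supercyclic if some vector has a projective orbit (the set of all scalar
multiples of its iterates) that is dense. -/
def IsSupercyclic {𝕜 X : Type*} [Semiring 𝕜] [AddCommMonoid X] [Module 𝕜 X] [TopologicalSpace X]
    (U : X →L[𝕜] X) : Prop :=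
  ∃ z : X, Dense {y : X | ∃ (c : 𝕜) (k : ℕ), y = c • (U ^ k) z}

theorem denseRange_pow {R X : Type*} [Semiring R] [AddCommMonoid X] [Module R X]
    [TopologicalSpace X] {U : X →L[R] X} (hU : DenseRange U) (n : ℕ) : DenseRange (U ^ n) := by
  induction n with
  | zero => exact denseRange_id
  | succ n ih =>
    rw [pow_succ]
    exact ih.comp hU (U ^ n).continuous

/-- A generalized backward shift in the sense of Godefroy and Shapiro: an operator whose kernel is
a line and whose powers have kernels with dense union. In infinite dimensions over a complete field,
`ker_le_range_pow` follows from the other two conditions by counting dimensions; it is part of the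
definition here in order to exclude nilpotent Jordan blocks. -/
structure IsGeneralizedBackwardShift {K V : Type*} [DivisionRing K] [AddCommGroup V] [Module K V]
    [TopologicalSpace V] (B : Module.End K V) : Prop where
  finrank_ker : Module.finrank K (LinearMap.ker B) = 1
  ker_le_range_pow (n : ℕ) : LinearMap.ker B ≤ LinearMap.range (B ^ n)
  dense_iSup_ker_pow : Dense ((⨆ n, LinearMap.ker (B ^ n) : Submodule K V) : Set V)

section TopologicalVectorSpace

variable {𝕜 X : Type*} [NontriviallyNormedField 𝕜] [AddCommGroup X] [Module 𝕜 X]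
  [TopologicalSpace X] [ContinuousAdd X] [ContinuousSMul 𝕜 X]

theorem isSupercyclic_of_dense_iSup_ker_pow [BaireSpace X] [SecondCountableTopology X]
    {U : X →L[𝕜] X}
    (hker : Dense ((⨆ n, LinearMap.ker ((U : Module.End 𝕜 X) ^ n) : Submodule 𝕜 X) : Set X))
    (hrange : DenseRange U) : IsSupercyclic U := by
  obtain ⟨z, hz⟩ : ∃ z, DenseRange fun p : 𝕜 × ℕ => p.1 • (U ^ p.2) z := by
    refine exists_denseRange_of_forall_isOpen
      (fun p => (U ^ p.2).continuous.const_smul p.1) fun O V hO hOne hV hVne => ?_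
    obtain ⟨u, huO, hu⟩ := hker.inter_open_nonempty O hO hOne
    obtain ⟨n, hn⟩ := mem_iSup_ker_pow.1 hu
    obtain ⟨_, hvV, v, rfl⟩ := (denseRange_pow hrange n).inter_open_nonempty V hV hVne
    have hcont : Continuous fun ε : 𝕜 => u + ε • v := by fun_prop
    have hnear : ∀ᶠ ε in 𝓝[≠] (0 : 𝕜), u + ε • v ∈ O :=
      (hcont.continuousAt.eventually (hO.mem_nhds (by simpa using huO))).filter_mono
        nhdsWithin_le_nhds
    obtain ⟨ε, hεO, hε⟩ := (hnear.and eventually_mem_nhdsWithin).exists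
    refine ⟨(ε⁻¹, n), u + ε • v, hεO, ?_⟩
    have hun : (U ^ n) u = 0 := by rwa [← ContinuousLinearMap.toLinearMap_pow] at hn
    rwa [map_add, hun, zero_add, map_smul, inv_smul_smul₀ hε]
  have hsub : Set.range (fun p : 𝕜 × ℕ => p.1 • (U ^ p.2) z) ⊆
      {y : X | ∃ (c : 𝕜) (k : ℕ), y = c • (U ^ k) z} :=
    Set.range_subset_iff.2 fun p => ⟨p.1, p.2, rfl⟩
  exact ⟨z, Dense.mono hsub hz⟩

theorem closure_of_range_supercyclic_general [T2Space X] [BaireSpace X] [SecondCountableTopology X]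
    {B : Module.End 𝕜 X} (hB : IsGeneralizedBackwardShift B) {U : X →L[𝕜] X} (hU : U ≠ 0)
    (hcomm : Commute B U) (hker : LinearMap.ker B ≤ LinearMap.ker (U : Module.End 𝕜 X)) :
    IsSupercyclic U := by
  obtain ⟨v, hv, hUv⟩ : ∃ v ∈ ⨆ n, LinearMap.ker (B ^ n), U v ≠ 0 := by
    by_contra! h
    exact hU (DFunLike.coe_injective
      (U.continuous.ext_on hB.dense_iSup_ker_pow continuous_zero h))
  obtain ⟨m, hm⟩ := mem_iSup_ker_pow.1 hv
  have hrange : ⨆ n, LinearMap.ker (B ^ n) ≤ LinearMap.range (U : Module.End 𝕜 X) :=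
    iSup_le (ker_pow_le_range_of_commute hcomm hB.finrank_ker hB.ker_le_range_pow hm hUv)
  exact isSupercyclic_of_dense_iSup_ker_pow
    (hB.dense_iSup_ker_pow.mono (iSup_mono (ker_pow_le_ker_pow_of_commute hcomm hker)))
    (hB.dense_iSup_ker_pow.mono hrange)

end TopologicalVectorSpace

/-- `B` is the weighted backward shift with weights `w`, in terms of the coordinate functionals
`xs`. No convergence of the series defining the shift is involved; when `xs` separates points,
`B` is determined by `xs` and `w`. -/
def IsWeightedBackwardShift_s15 {K V : Type*} [Field K] [AddCommGroup V] [Module K V]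
    (xs : ℕ → Module.Dual K V) (w : ℕ → K) (B : Module.End K V) : Prop :=
  ∀ n z, xs n (B z) = w n * xs (n + 1) z

namespace IsWeightedBackwardShift_s15

variable {K V : Type*} [Field K] [AddCommGroup V] [Module K V]
  {x : ℕ → V} {xs : ℕ → Module.Dual K V} {w : ℕ → K} {B : Module.End K V}

theorem map_zero_index (hB : IsWeightedBackwardShift_s15 xs w B)
    (hbi : ∀ m n, xs m (x n) = if m = n then 1 else 0)
    (hsep : ∀ z, (∀ n, xs n z = 0) → z = 0) : B (x 0) = 0 :=
  hsep _ fun n => by simp [hB n, hbi]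

theorem map_succ_index (hB : IsWeightedBackwardShift_s15 xs w B)
    (hbi : ∀ m n, xs m (x n) = if m = n then 1 else 0)
    (hsep : ∀ z, (∀ n, xs n z = 0) → z = 0) (n : ℕ) : B (x (n + 1)) = w n • x n := by
  refine sub_eq_zero.1 (hsep _ fun m => ?_)
  rcases eq_or_ne m n with rfl | hmn
  · simp [hB m, hbi]
  · simp [hB m, hbi, hmn]

theorem ker_eq_span (hB : IsWeightedBackwardShift_s15 xs w B)
    (hbi : ∀ m n, xs m (x n) = if m = n then 1 else 0)
    (hsep : ∀ z, (∀ n, xs n z = 0) → z = 0) (hw : ∀ n, w n ≠ 0) :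
    LinearMap.ker B = Submodule.span K {x 0} := by
  refine le_antisymm (fun z hz => Submodule.mem_span_singleton.2 ⟨xs 0 z, ?_⟩)
    ((Submodule.span_singleton_le_iff_mem _ _).2 (hB.map_zero_index hbi hsep))
  refine sub_eq_zero.1 (hsep _ fun m => ?_)
  cases m with
  | zero => simp [hbi]
  | succ m =>
    have hcoord : w m * xs (m + 1) z = 0 := by rw [← hB m, LinearMap.mem_ker.1 hz, map_zero]
    simp [hbi, (mul_eq_zero.1 hcoord).resolve_left (hw m)]

theorem pow_succ_apply_eq_zero (hB : IsWeightedBackwardShift_s15 xs w B)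
    (hbi : ∀ m n, xs m (x n) = if m = n then 1 else 0)
    (hsep : ∀ z, (∀ n, xs n z = 0) → z = 0) (n : ℕ) : (B ^ (n + 1)) (x n) = 0 := by
  induction n with
  | zero => simpa using hB.map_zero_index hbi hsep
  | succ n ih =>
    rw [pow_succ, Module.End.mul_apply, hB.map_succ_index hbi hsep, map_smul, ih, smul_zero]

theorem mem_range_pow (hB : IsWeightedBackwardShift_s15 xs w B)
    (hbi : ∀ m n, xs m (x n) = if m = n then 1 else 0)
    (hsep : ∀ z, (∀ n, xs n z = 0) → z = 0) (hw : ∀ n, w n ≠ 0) (m n : ℕ) :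
    x m ∈ LinearMap.range (B ^ n) := by
  induction n generalizing m with
  | zero => exact ⟨x m, rfl⟩
  | succ n ih =>
    obtain ⟨y, hy⟩ := ih (m + 1)
    refine ⟨(w m)⁻¹ • y, ?_⟩
    rw [map_smul, pow_succ', Module.End.mul_apply, hy, hB.map_succ_index hbi hsep,
      inv_smul_smul₀ (hw m)]

theorem isGeneralizedBackwardShift [TopologicalSpace V] (hB : IsWeightedBackwardShift_s15 xs w B)
    (hbi : ∀ m n, xs m (x n) = if m = n then 1 else 0)
    (hsep : ∀ z, (∀ n, xs n z = 0) → z = 0) (hw : ∀ n, w n ≠ 0)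
    (hdense : Dense (Submodule.span K (Set.range x) : Set V)) : IsGeneralizedBackwardShift B where
  finrank_ker := by
    have hx0 : x 0 ≠ 0 := fun h => by simpa [h] using hbi 0 0
    rw [hB.ker_eq_span hbi hsep hw, finrank_span_singleton hx0]
  ker_le_range_pow n := by
    rw [hB.ker_eq_span hbi hsep hw, Submodule.span_singleton_le_iff_mem]
    exact hB.mem_range_pow hbi hsep hw 0 n
  dense_iSup_ker_pow := hdense.mono <| Submodule.span_le.2 <| Set.range_subset_iff.2 fun n =>
    mem_iSup_ker_pow.2 ⟨n + 1, hB.pow_succ_apply_eq_zero hbi hsep n⟩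

end IsWeightedBackwardShift_s15

theorem isWeightedBackwardShift_of_hasSum {𝕜 X : Type*} [NormedField 𝕜] [AddCommGroup X]
    [Module 𝕜 X] [TopologicalSpace X] {x : ℕ → X} {xs : ℕ → X →L[𝕜] 𝕜} {w : ℕ → 𝕜} {B : X →L[𝕜] X}
    (hbi : ∀ m n, xs m (x n) = if m = n then 1 else 0)
    (hB : ∀ z, HasSum (fun n => (w n * xs (n + 1) z) • x n) (B z)) :
    IsWeightedBackwardShift_s15 (fun n => (xs n : Module.Dual 𝕜 X)) w (B : Module.End 𝕜 X) := by
  intro m z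
  refine ((hB z).mapL (xs m)).unique ?_
  convert hasSum_single m fun n hn => ?_ using 1
  · simp [hbi]
  · simp [hbi, hn.symm]

section NormedSpace

variable {𝕜 X : Type*} [NontriviallyNormedField 𝕜] [NormedAddCommGroup X] [NormedSpace 𝕜 X]

theorem secondCountableTopology_of_dense_span [TopologicalSpace.SeparableSpace 𝕜] {s : Set X}
    (hs : s.Countable) (hdense : Dense (Submodule.span 𝕜 s : Set X)) :
    SecondCountableTopology X := by
  have hsep : TopologicalSpace.IsSeparable (Set.univ : Set X) :=
    hdense.closure_eq ▸ (hs.isSeparable.span (R := 𝕜)).closure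
  have := TopologicalSpace.isSeparable_univ_iff.1 hsep
  exact UniformSpace.secondCountable_of_separable X

theorem summable_smul_of_summable_norm [CompleteSpace X] {x : ℕ → X} {xs : ℕ → X →L[𝕜] 𝕜}
    {w : ℕ → 𝕜} {C D : ℝ} (hx : ∀ n, ‖x n‖ ≤ D) (hxs : ∀ n, ‖xs n‖ ≤ C)
    (hw : Summable fun n => ‖w n‖) (z : X) :
    Summable fun n => (w n * xs (n + 1) z) • x n := by
  refine Summable.of_norm_bounded (hw.mul_right (C * ‖z‖ * D)) fun n => ?_
  have hC : 0 ≤ C := (norm_nonneg _).trans (hxs 0)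
  rw [norm_smul, norm_mul, mul_assoc]
  gcongr
  exacts [(xs (n + 1)).le_of_opNorm_le (hxs _) z, hx n]

/-- The operators that commute with `B` and vanish at `v`: a closed subspace containing the
norm-closed span of the positive powers of `B` when `B v = 0`. -/
noncomputable def commutantVanishingAt (B : X →L[𝕜] X) (v : X) : Submodule 𝕜 (X →L[𝕜] X) :=
  (Subalgebra.centralizer 𝕜 {B}).toSubmodule ⊓
    LinearMap.ker (ContinuousLinearMap.apply 𝕜 X v : (X →L[𝕜] X) →ₗ[𝕜] X)

theorem mem_commutantVanishingAt {B T : X →L[𝕜] X} {v : X} :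
    T ∈ commutantVanishingAt B v ↔ Commute B T ∧ T v = 0 := by
  simp [commutantVanishingAt, Subalgebra.mem_centralizer_iff, Commute, SemiconjBy]

theorem isClosed_commutantVanishingAt (B : X →L[𝕜] X) (v : X) :
    IsClosed (commutantVanishingAt B v : Set (X →L[𝕜] X)) :=
  (Set.isClosed_centralizer {B}).inter (ContinuousLinearMap.apply 𝕜 X v).isClosed_ker

theorem tsum_smul_pow_succ_mem_commutantVanishingAt {B : X →L[𝕜] X} {v : X} (hBv : B v = 0)
    (a : ℕ → 𝕜) : ∑' k, a k • B ^ (k + 1) ∈ commutantVanishingAt B v := by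
  refine tsum_mem (isClosed_commutantVanishingAt B v) fun k => Submodule.smul_mem _ _ ?_
  rw [mem_commutantVanishingAt, pow_succ, mul_apply_eq_comp, hBv, map_zero]
  exact ⟨(Commute.self_pow B k).mul_right (Commute.refl B), rfl⟩

end NormedSpace

/-- (Indices are 0-based: `T_f = Σₖ f k • B_w^{k+1}`, matching the paper's
`Σ_{k ≥ 1} λ_k B_w^k`.)  Every nonzero operator `U` in the operator-norm closure of
`{T_f : f ∈ ℓ¹}` is supercyclic: there is `z ∈ X` such that `{c • Uᵏ z : c ∈ 𝕜, k ≥ 0}` is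
dense in `X`. -/
theorem closure_of_range_supercyclic
    {𝕜 : Type*} [RCLike 𝕜] {X : Type*} [NormedAddCommGroup X] [NormedSpace 𝕜 X]
    [CompleteSpace X]
    (x : ℕ → X) (xs : ℕ → X →L[𝕜] 𝕜) (C : ℝ)
    (hx : ∀ n, ‖x n‖ = 1)
    (hxs : ∀ n, ‖xs n‖ ≤ C)
    (hbi : ∀ m n, xs m (x n) = if m = n then 1 else 0)
    (hdense : Dense (Submodule.span 𝕜 (Set.range x) : Set X))
    (hsep : ∀ z : X, (∀ n, xs n z = 0) → z = 0)
    (w : ℕ → ℝ)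
    (hw_pos : ∀ n, 0 < w n)
    (hw_anti : StrictAnti w)
    (hw_lim : Tendsto w atTop (nhds 0))
    (hw_sum : Summable w)
    (hw_le : ∑' n, w n ≤ C⁻¹)
    (B : X →L[𝕜] X)
    (hB : ∀ z : X, B z = ∑' n : ℕ, ((w n : 𝕜) * xs (n + 1) z) • x n)
    (U : X →L[𝕜] X) (hU : U ≠ 0)
    (lam : ℕ → lp (fun _ : ℕ => 𝕜) 1)
    (hconv : Tendsto
      (fun m => ‖(∑' k : ℕ, (lam m k : 𝕜) • B ^ (k + 1)) - U‖) atTop (nhds 0)) :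
    ∃ z : X, Dense {y : X | ∃ (c : 𝕜) (k : ℕ), y = c • (U ^ k) z} := by
  have hbound : ∀ n, ‖x n‖ ≤ 1 := fun n => (hx n).le
  have hw_norm : Summable fun n => ‖(w n : 𝕜)‖ := by simpa [abs_of_pos (hw_pos _)] using hw_sum
  have hw_ne : ∀ n, (w n : 𝕜) ≠ 0 := fun n => RCLike.ofReal_ne_zero.2 (hw_pos n).ne'
  have hshift : IsWeightedBackwardShift_s15 (fun n => (xs n : Module.Dual 𝕜 X)) (fun n => (w n : 𝕜))
      (B : Module.End 𝕜 X) := isWeightedBackwardShift_of_hasSum hbi fun z =>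
    hB z ▸ (summable_smul_of_summable_norm hbound hxs hw_norm z).hasSum
  have hU_mem : U ∈ commutantVanishingAt B (x 0) :=
    (isClosed_commutantVanishingAt B (x 0)).mem_of_tendsto
      (tendsto_iff_norm_sub_tendsto_zero.2 hconv) (.of_forall fun m =>
        tsum_smul_pow_succ_mem_commutantVanishingAt (hshift.map_zero_index hbi hsep) (lam m))
  obtain ⟨hcomm, hU0⟩ := mem_commutantVanishingAt.1 hU_mem
  have hker : LinearMap.ker (B : Module.End 𝕜 X) ≤ LinearMap.ker (U : Module.End 𝕜 X) := by
    rwa [hshift.ker_eq_span hbi hsep hw_ne, Submodule.span_singleton_le_iff_mem]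
  have : SecondCountableTopology X :=
    secondCountableTopology_of_dense_span (Set.countable_range x) hdense
  exact closure_of_range_supercyclic_general
    (hshift.isGeneralizedBackwardShift hbi hsep hw_ne hdense) hU
    (hcomm.map ContinuousLinearMap.toLinearMapRingHom) hker
end
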